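/- arXiv:0904.2072 — 5 statements merged into one kernel-verified Lean document; each statement's English description precedes it below -/
import Mathlib

section
/- If μ < 0, then equation (*) admits no large solution: there is no u ∈ C²(Ω) satisfying −Δu − (μ/δ²)u + e^u = 0 pointwise in Ω together with u(x) → ∞ as δ(x) → 0. -/
/-!
Write `c = -μ > 0`, so that a solution satisfies `Δu = c u / δ² + e^u`. Suppose `u` is large.

* Upper bound (`keller_osserman`): comparison with the barrier `-2 log (r² - |y - x|²)` on the ball
  of radius `r = δ(x)/2` gives `e^{u(x)} δ(x)² ≤ K` for all `x` close to `∂Ω`, with `K` depending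
  only on `N`.
* Growth (`growth_step`): near `∂Ω` one has `u ≥ M`, hence `Δu > c M / (9 r²)` on that ball, and
  comparison with a paraboloid produces a point `y` with `|y - x| = r` and
  `u(y) ≥ u(x) + c M / (18 N)`. For a suitable `M` the increment is `2`. Since `δ(y) ≥ δ(x)/2`, the
  quantity `e^u δ²` grows by the factor `e² / 4 > 3/2`.

Starting at a point where `u` exceeds its maximum over the compact set `{δ ≥ ε}`, the points produced
by iterating the growth step all stay in the strip `{δ < ε}`, because `u` only increases. So `e^u δ²`
is unbounded there, contradicting the upper bound.

Both comparisons use only that the second derivatives of a function are nonpositive at an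
interior maximum (`lap_le_of_isLocalMax`).
-/

open MeasureTheory Real Filter Topology Set

noncomputable section

abbrev Euc (N : ℕ) := EuclideanSpace ℝ (Fin N)

/-- Distance of `x` to the boundary of `Ω` (distance to the complement). -/
def bdist {N : ℕ} (Ω : Set (Euc N)) (x : Euc N) : ℝ := Metric.infDist x Ωᶜ

/-- The strip `Ω_ρ = {x ∈ Ω : δ(x) < ρ}`. -/
def bstrip {N : ℕ} (Ω : Set (Euc N)) (ρ : ℝ) : Set (Euc N) := {x ∈ Ω | bdist Ω x < ρ}

/-- `C³`-regularity of the boundary, expressed through the regularity of the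
distance function in a strip near the boundary. -/
def BoundaryC3 {N : ℕ} (Ω : Set (Euc N)) : Prop :=
  ∃ ρ > 0, ContDiffOn ℝ 3 (bdist Ω) (bstrip Ω ρ)

/-- The Laplacian of `u`. -/
def lap {N : ℕ} (u : Euc N → ℝ) (x : Euc N) : ℝ :=
  ∑ i : Fin N, fderiv ℝ (fun y => fderiv ℝ u y (EuclideanSpace.single i 1)) x
    (EuclideanSpace.single i 1)

/-- A classical solution of `−Δu − (μ/δ²)u + e^u = 0` in `Ω`. -/
def IsSolution {N : ℕ} (μ : ℝ) (Ω : Set (Euc N)) (u : Euc N → ℝ) : Prop :=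
  ContDiffOn ℝ 2 u Ω ∧
  ∀ x ∈ Ω, -lap u x - (μ / (bdist Ω x) ^ 2) * u x + Real.exp (u x) = 0

/-- A large solution: `u(x) → ∞` as `δ(x) → 0`. -/
def IsLarge {N : ℕ} (Ω : Set (Euc N)) (u : Euc N → ℝ) : Prop :=
  ∀ M : ℝ, ∃ ε > 0, ∀ x ∈ Ω, bdist Ω x < ε → M ≤ u x

/-! ### Second derivatives at an interior maximum -/

lemma second_deriv_nonpos {F F' : ℝ → ℝ} {d : ℝ} (hmax : IsLocalMax F 0)
    (h1 : ∀ᶠ t in 𝓝 (0 : ℝ), HasDerivAt F (F' t) t) (h2 : HasDerivAt F' d 0) : d ≤ 0 := by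
  by_contra! hd
  have he : deriv F =ᶠ[𝓝 0] F' := h1.mono fun t ht => ht.deriv
  have hdd : deriv (deriv F) 0 = d := by rw [he.deriv_eq, h2.deriv]
  have hmin : IsLocalMin F 0 := isLocalMin_of_deriv_deriv_pos (by rw [hdd]; exact hd)
    hmax.deriv_eq_zero h1.self_of_nhds.continuousAt
  -- a point that is both a local maximum and a local minimum has `F` constant around it
  have hc : F =ᶠ[𝓝 0] fun _ => F 0 := by
    filter_upwards [hmax, hmin] with t a b using le_antisymm a b
  have h3 : deriv (deriv F) 0 = 0 := by
    rw [hc.deriv.deriv_eq]; simp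
  linarith

/-- If `u - φ` has a local maximum at `y`, then `Δu(y) ≤ Δφ(y)`; the derivatives of `φ` enter only
through its restrictions to coordinate lines, with first derivatives `φ' i` and second derivatives
`d i`. -/
lemma lap_le_of_isLocalMax {N : ℕ} {Ω : Set (Euc N)} (hΩo : IsOpen Ω) {u φ : Euc N → ℝ}
    (hu : ContDiffOn ℝ 2 u Ω) {y : Euc N} (hy : y ∈ Ω)
    (hmax : IsLocalMax (fun z => u z - φ z) y) (φ' : Fin N → ℝ → ℝ) (d : Fin N → ℝ)
    (h1 : ∀ i, ∀ᶠ t in 𝓝 (0 : ℝ),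
      HasDerivAt (fun t => φ (y + t • EuclideanSpace.single i 1)) (φ' i t) t)
    (h2 : ∀ i, HasDerivAt (φ' i) (d i) 0) : lap u y ≤ ∑ i, d i := by
  unfold lap
  refine Finset.sum_le_sum fun i _ => ?_
  set e : Euc N := EuclideanSpace.single i 1 with he
  have hline : ∀ t : ℝ, HasDerivAt (fun t : ℝ => y + t • e) e t := fun t => by
    simpa using ((hasDerivAt_id t).smul_const e).const_add y
  have hy0 : y + (0 : ℝ) • e = y := by simp
  have hcont : Tendsto (fun t : ℝ => y + t • e) (𝓝 0) (𝓝 y) := by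
    have := (hline 0).continuousAt.tendsto
    rwa [hy0] at this
  have hΩ : ∀ᶠ t in 𝓝 (0 : ℝ), y + t • e ∈ Ω := hcont.eventually (hΩo.mem_nhds hy)
  have hu1 : ∀ᶠ t in 𝓝 (0 : ℝ),
      HasDerivAt (fun t : ℝ => u (y + t • e)) (fderiv ℝ u (y + t • e) e) t := by
    filter_upwards [hΩ] with t ht
    have hd : DifferentiableAt ℝ u (y + t • e) :=
      (hu.contDiffAt (hΩo.mem_nhds ht)).differentiableAt (by norm_num)
    exact hd.hasFDerivAt.comp_hasDerivAt t (hline t)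
  have hu2 : HasDerivAt (fun t : ℝ => fderiv ℝ u (y + t • e) e)
      (fderiv ℝ (fun z => fderiv ℝ u z e) y e) 0 := by
    have hd : DifferentiableAt ℝ (fun z => fderiv ℝ u z e) y := by
      have h := ((hu.contDiffAt (hΩo.mem_nhds hy)).fderiv_right (m := 1)
        (by norm_num)).differentiableAt (by norm_num)
      exact h.clm_apply (differentiableAt_const e)
    have hd' : HasFDerivAt (fun z => fderiv ℝ u z e)
        (fderiv ℝ (fun z => fderiv ℝ u z e) y) (y + (0 : ℝ) • e) := by
      rw [hy0]; exact hd.hasFDerivAt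
    exact hd'.comp_hasDerivAt (0 : ℝ) (hline 0)
  have hm : IsLocalMax (fun t : ℝ => u (y + t • e) - φ (y + t • e)) 0 := by
    have := hcont.eventually hmax
    simpa [IsLocalMax, IsMaxFilter] using this
  have := second_deriv_nonpos hm
    (by filter_upwards [hu1, h1 i] with t a b using a.sub b) (hu2.sub (h2 i))
  linarith

/-! ### Comparison on a ball -/

lemma norm_sq_line {N : ℕ} (z : Euc N) (i : Fin N) (t : ℝ) :
    ‖z + t • EuclideanSpace.single i (1 : ℝ)‖ ^ 2 = ‖z‖ ^ 2 + 2 * z i * t + t ^ 2 := by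
  rw [norm_add_sq_real, inner_smul_right, EuclideanSpace.inner_single_right, norm_smul]
  simp
  ring

lemma hasDerivAt_quadratic (A b c t : ℝ) :
    HasDerivAt (fun t : ℝ => A + b * t + c * t ^ 2) (b + 2 * c * t) t := by
  have h := (((hasDerivAt_id' t).const_mul b).const_add A).fun_add
    (((hasDerivAt_id' t).fun_pow 2).const_mul c)
  exact h.congr_deriv (by simp; ring)

/-- Interior Keller–Osserman estimate: `Δu ≥ e^u` on a ball of radius `r` bounds `e^{u}` at the
centre by a multiple of `r⁻²`. -/
lemma keller_osserman {N : ℕ} {Ω : Set (Euc N)} (hΩo : IsOpen Ω) {u : Euc N → ℝ}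
    (hu : ContDiffOn ℝ 2 u Ω) {x : Euc N} {r : ℝ} (hr : 0 < r)
    (hB : Metric.closedBall x r ⊆ Ω)
    (hlap : ∀ y ∈ Metric.closedBall x r, exp (u y) ≤ lap u y) :
    exp (u x) * r ^ 2 ≤ 4 * N + 8 := by
  set g : Euc N → ℝ := fun y => r ^ 2 - ‖y - x‖ ^ 2 with hg
  have hgc : Continuous g := by fun_prop
  -- maximizing `e^u g²`, continuous up to the sphere, is maximizing `u + 2 log g`
  obtain ⟨y, hyB, hymax⟩ := (isCompact_closedBall x r).exists_isMaxOn
    ⟨x, Metric.mem_closedBall_self hr.le⟩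
    (f := fun y => exp (u y) * g y ^ 2)
    (((hu.continuousOn.mono hB).rexp).mul (hgc.pow 2).continuousOn)
  have hxy : exp (u x) * (r ^ 2) ^ 2 ≤ exp (u y) * g y ^ 2 := by
    have := hymax (Metric.mem_closedBall_self hr.le : x ∈ Metric.closedBall x r)
    simpa [hg] using this
  have hyr : ‖y - x‖ ≤ r := by rwa [Metric.mem_closedBall, dist_eq_norm] at hyB
  have hgy : 0 < g y := by
    have h0 : 0 ≤ g y := by simp only [hg]; nlinarith [norm_nonneg (y - x)]
    refine lt_of_le_of_ne h0 fun h => ?_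
    rw [← h] at hxy
    have : 0 < exp (u x) * (r ^ 2) ^ 2 := by positivity
    simp at hxy
    linarith
  have hylt : ‖y - x‖ < r := by
    simp only [hg] at hgy
    nlinarith [norm_nonneg (y - x)]
  have hball : ∀ᶠ z in 𝓝 y, z ∈ Metric.closedBall x r :=
    Filter.mem_of_superset (Metric.isOpen_ball.mem_nhds (by simpa [dist_eq_norm] using hylt))
      Metric.ball_subset_closedBall
  have hgpos : ∀ᶠ z in 𝓝 y, 0 < g z := hgc.continuousAt.eventually (lt_mem_nhds hgy)
  have hloc : IsLocalMax (fun z => u z - (-2 * log (g z))) y := by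
    filter_upwards [hball, hgpos] with z hz hgz
    have h := hymax hz
    have h' := log_le_log (by positivity) h
    rw [log_mul (exp_ne_zero _) (by positivity), log_mul (exp_ne_zero _) (by positivity),
      log_exp, log_exp, log_pow, log_pow] at h'
    push_cast at h'
    linarith
  set w : Euc N := y - x with hw
  have hgl : ∀ (i : Fin N) (t : ℝ), g (y + t • EuclideanSpace.single i (1 : ℝ))
      = g y - 2 * w i * t - t ^ 2 := by
    intro i t
    have := norm_sq_line w i t
    have e1 : y + t • EuclideanSpace.single i (1 : ℝ) - x
        = w + t • EuclideanSpace.single i (1 : ℝ) := by rw [hw]; abel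
    simp only [hg]
    rw [e1, this, ← hw]; ring
  have hq : ∀ (i : Fin N) (t : ℝ),
      HasDerivAt (fun t : ℝ => g y - 2 * w i * t - t ^ 2) (-2 * w i - 2 * t) t := by
    intro i t
    have h := hasDerivAt_quadratic (g y) (-2 * w i) (-1) t
    have e : (fun t : ℝ => g y - 2 * w i * t - t ^ 2)
        = fun t => g y + -2 * w i * t + -1 * t ^ 2 := by
      funext t; ring
    rw [e]
    exact h.congr_deriv (by ring)
  have key := lap_le_of_isLocalMax hΩo hu (hB hyB) hloc
    (fun i t => -2 * ((-2 * w i - 2 * t) / (g y - 2 * w i * t - t ^ 2)))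
    (fun i => 4 / g y + 8 * (w i) ^ 2 / g y ^ 2)
    (by
      intro i
      have hpos : ∀ᶠ t in 𝓝 (0 : ℝ), 0 < g y - 2 * w i * t - t ^ 2 := by
        have hc : ContinuousAt (fun t : ℝ => g y - 2 * w i * t - t ^ 2) 0 := by fun_prop
        exact hc.eventually (lt_mem_nhds (by simpa using hgy))
      filter_upwards [hpos] with t ht
      simp only [hgl]
      exact ((hq i t).log ht.ne').const_mul (-2))
    (by
      intro i
      have hn : HasDerivAt (fun t : ℝ => -2 * w i - 2 * t) (-2) 0 := by
        simpa using ((hasDerivAt_id (0 : ℝ)).const_mul 2).const_sub (-2 * w i)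
      have h := ((hn.div (hq i 0) (by simpa using hgy.ne')).const_mul (-2))
      refine h.congr_deriv ?_
      simp
      field_simp
      ring)
  have hsum : ∑ i, (4 / g y + 8 * (w i) ^ 2 / g y ^ 2)
      = 4 * N / g y + 8 * ‖w‖ ^ 2 / g y ^ 2 := by
    rw [Finset.sum_add_distrib, EuclideanSpace.real_norm_sq_eq, ← Finset.sum_div,
      ← Finset.sum_div (f := fun i => 8 * (w i) ^ 2), ← Finset.mul_sum]
    simp
    ring
  rw [hsum] at key
  have h1 := (hlap y hyB).trans key
  have h2 : exp (u y) * g y ^ 2 ≤ 4 * N * g y + 8 * ‖w‖ ^ 2 := by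
    calc exp (u y) * g y ^ 2 ≤ (4 * N / g y + 8 * ‖w‖ ^ 2 / g y ^ 2) * g y ^ 2 := by gcongr
      _ = _ := by field_simp
  have hgr : g y ≤ r ^ 2 := by simp only [hg]; nlinarith [sq_nonneg ‖y - x‖]
  have hwr : ‖w‖ ^ 2 ≤ r ^ 2 := by gcongr
  have h3 : exp (u x) * r ^ 2 * r ^ 2 ≤ (4 * N + 8) * r ^ 2 := by
    have : (4 * N : ℝ) * g y ≤ 4 * N * r ^ 2 := by gcongr
    nlinarith
  exact le_of_mul_le_mul_right h3 (by positivity)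

/-- If `Δu > 2Na` on a ball of radius `r`, then some point of the bounding sphere has
`u ≥ u(x) + a r²`. -/
lemma growth_step {N : ℕ} {Ω : Set (Euc N)} (hΩo : IsOpen Ω) {u : Euc N → ℝ}
    (hu : ContDiffOn ℝ 2 u Ω) {x : Euc N} {r a : ℝ} (hr : 0 < r)
    (hB : Metric.closedBall x r ⊆ Ω)
    (hlap : ∀ y ∈ Metric.closedBall x r, 2 * N * a < lap u y) :
    ∃ y, dist y x = r ∧ u x + a * r ^ 2 ≤ u y := by
  obtain ⟨y, hyB, hymax⟩ := (isCompact_closedBall x r).exists_isMaxOn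
    ⟨x, Metric.mem_closedBall_self hr.le⟩
    (f := fun y => u y - a * ‖y - x‖ ^ 2)
    ((hu.continuousOn.mono hB).sub (by fun_prop))
  have hxy : u x ≤ u y - a * ‖y - x‖ ^ 2 := by
    have := hymax (Metric.mem_closedBall_self hr.le : x ∈ Metric.closedBall x r)
    simpa using this
  have hyr : dist y x = r := by
    refine le_antisymm hyB (not_lt.1 fun hlt => ?_)
    have hloc : IsLocalMax (fun z => u z - a * ‖z - x‖ ^ 2) y :=
      hymax.isLocalMax (Filter.mem_of_superset (Metric.isOpen_ball.mem_nhds hlt)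
        Metric.ball_subset_closedBall)
    have key := lap_le_of_isLocalMax hΩo hu (hB hyB) hloc
      (fun i t => a * (2 * (y - x) i + 2 * t)) (fun _ => a * 2)
      (by
        intro i
        refine Filter.Eventually.of_forall fun t => ?_
        have e1 : ∀ t : ℝ, a * ‖y + t • EuclideanSpace.single i (1 : ℝ) - x‖ ^ 2
            = a * (‖y - x‖ ^ 2 + 2 * (y - x) i * t + t ^ 2) := by
          intro t
          rw [← norm_sq_line]
          congr 4
          abel
        simp only [e1]
        simpa using (hasDerivAt_quadratic (‖y - x‖ ^ 2) (2 * (y - x) i) 1 t).const_mul a)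
      (by
        intro i
        have h := (hasDerivAt_quadratic (2 * (y - x) i) 2 0 0).const_mul a
        simpa using h)
    have := hlap y hyB
    simp at key
    linarith
  refine ⟨y, hyr, ?_⟩
  rw [← dist_eq_norm, hyr] at hxy
  linarith

/-! ### Nonexistence of large solutions -/

theorem no_large_solution_of_mu_neg {N : ℕ} (hN : 2 ≤ N)
    (Ω : Set (Euc N)) (hΩo : IsOpen Ω) (hΩne : Ω.Nonempty)
    (hΩb : Bornology.IsBounded Ω) (hΩreg : BoundaryC3 Ω)
    {μ : ℝ} (hμ : μ < 0) :
    ¬ ∃ u : Euc N → ℝ, IsSolution μ Ω u ∧ IsLarge Ω u := by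
  rintro ⟨u, ⟨hu, heq⟩, hlarge⟩
  have hNpos : (0 : ℝ) < N := by exact_mod_cast (by omega : 0 < N)
  have : Nonempty (Fin N) := ⟨⟨0, by omega⟩⟩
  have hne_univ : Ω ≠ univ := fun h => by
    rw [h] at hΩb
    exact NormedSpace.unbounded_univ ℝ (Euc N) hΩb
  have hcne : Ωᶜ.Nonempty := nonempty_compl.2 hne_univ
  have hcc : IsClosed Ωᶜ := hΩo.isClosed_compl
  have hpos : ∀ x ∈ Ω, 0 < bdist Ω x := fun x hx =>
    (hcc.notMem_iff_infDist_pos hcne).1 (by simpa using hx)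
  have hmem : ∀ x, 0 < bdist Ω x → x ∈ Ω := fun x hx => by
    have := (hcc.notMem_iff_infDist_pos hcne).2 hx
    simpa using this
  have hlip : ∀ x y, bdist Ω x ≤ bdist Ω y + dist x y := fun x y =>
    Metric.infDist_le_infDist_add_dist
  -- with this threshold the growth step increases `u` by `2`
  set M : ℝ := 36 * N / (-μ) with hM
  have hMpos : 0 < M := div_pos (by positivity) (by linarith)
  have hMμ : -μ * M = 36 * N := by rw [hM]; exact mul_div_cancel₀ _ (by linarith)
  obtain ⟨ε₀, hε₀, hge⟩ := hlarge M
  set ε := ε₀ / 2 with hε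
  have hεpos : 0 < ε := by positivity
  -- for `y` in the ball of radius `r = δ(x)/2` one has `δ(y) ≤ 3r < ε₀`, hence `u y ≥ M`
  have hstep : ∀ x ∈ Ω, bdist Ω x < ε → Metric.closedBall x (bdist Ω x / 2) ⊆ Ω ∧
      ∀ y ∈ Metric.closedBall x (bdist Ω x / 2),
        4 * N / (bdist Ω x / 2) ^ 2 + exp (u y) ≤ lap u y := by
    intro x hx hxε
    have hδ := hpos x hx
    have hsub : Metric.closedBall x (bdist Ω x / 2) ⊆ Ω := fun y hy => by
      have h1 := hlip x y
      rw [dist_comm] at h1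
      rw [Metric.mem_closedBall] at hy
      exact hmem y (by linarith)
    refine ⟨hsub, fun y hy => ?_⟩
    have hyΩ := hsub hy
    have hδy := hpos y hyΩ
    have h1 := hlip y x
    rw [Metric.mem_closedBall] at hy
    have h2 : M ≤ u y := hge y hyΩ (by linarith)
    have h3 := heq y hyΩ
    have h4 : bdist Ω y ^ 2 ≤ 9 * (bdist Ω x / 2) ^ 2 := by nlinarith
    have h5 : 4 * N / (bdist Ω x / 2) ^ 2 ≤ -(μ / bdist Ω y ^ 2) * u y := by
      calc 4 * N / (bdist Ω x / 2) ^ 2 = 36 * N / (9 * (bdist Ω x / 2) ^ 2) := by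
            field_simp; norm_num
        _ ≤ 36 * N / bdist Ω y ^ 2 := by gcongr
        _ = -(μ / bdist Ω y ^ 2) * M := by rw [← hMμ]; ring
        _ ≤ -(μ / bdist Ω y ^ 2) * u y := by
            refine mul_le_mul_of_nonneg_left h2 ?_
            rw [← neg_div]
            exact div_nonneg (by linarith) (by positivity)
    linarith
  have hupper : ∀ x ∈ Ω, bdist Ω x < ε →
      exp (u x) * bdist Ω x ^ 2 ≤ 4 * (4 * N + 8) := by
    intro x hx hxε
    obtain ⟨hsub, hl⟩ := hstep x hx hxε
    have hδ := hpos x hx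
    have := keller_osserman hΩo hu (half_pos hδ) hsub (fun y hy => by
      have := hl y hy
      have h0 : 0 ≤ 4 * N / (bdist Ω x / 2) ^ 2 := by positivity
      linarith)
    nlinarith
  have hgrow : ∀ x ∈ Ω, bdist Ω x < ε → ∃ y ∈ Ω, u x + 2 ≤ u y ∧
      bdist Ω x / 2 ≤ bdist Ω y := by
    intro x hx hxε
    obtain ⟨hsub, hl⟩ := hstep x hx hxε
    have hδ := hpos x hx
    obtain ⟨y, hy, hyu⟩ := growth_step (a := 2 / (bdist Ω x / 2) ^ 2) hΩo hu (half_pos hδ) hsub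
      (fun y hy => by
        have := hl y hy
        have h0 := exp_pos (u y)
        have e : 2 * N * (2 / (bdist Ω x / 2) ^ 2) = 4 * N / (bdist Ω x / 2) ^ 2 := by ring
        linarith)
    refine ⟨y, hsub (Metric.mem_closedBall.2 hy.le), ?_, ?_⟩
    · rwa [div_mul_cancel₀ _ (by positivity)] at hyu
    · have := hlip x y
      rw [dist_comm, hy] at this
      linarith
  have hδc : Continuous (bdist Ω) := Metric.continuous_infDist_pt _
  obtain ⟨B, hB⟩ : ∃ B, ∀ x ∈ Ω, ε ≤ bdist Ω x → u x ≤ B := by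
    have hsub : {x | ε ≤ bdist Ω x} ⊆ Ω := fun x hx => hmem x (hεpos.trans_le hx)
    have hK : IsCompact {x | ε ≤ bdist Ω x} :=
      Metric.isCompact_of_isClosed_isBounded (isClosed_le continuous_const hδc) (hΩb.subset hsub)
    obtain ⟨B, hB⟩ := hK.bddAbove_image (hu.continuousOn.mono hsub)
    exact ⟨B, fun x _ hx => hB ⟨x, hx, rfl⟩⟩
  obtain ⟨x₀, hx₀, hx₀B⟩ : ∃ x₀ ∈ Ω, B < u x₀ := by
    obtain ⟨ε₁, hε₁, h⟩ := hlarge (B + 1)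
    obtain ⟨p, hp⟩ := nonempty_frontier_iff.2 ⟨hΩne, hne_univ⟩
    have hpc : p ∈ Ωᶜ := by
      rw [hΩo.frontier_eq] at hp
      exact hp.2
    obtain ⟨x, hx, hxp⟩ := Metric.mem_closure_iff.1 (frontier_subset_closure hp) ε₁ hε₁
    have hd : bdist Ω x ≤ dist x p := Metric.infDist_le_dist_of_mem hpc
    rw [dist_comm] at hxp
    exact ⟨x, hx, by linarith [h x hx (by linarith)]⟩
  have hstrip : ∀ x ∈ Ω, B < u x → bdist Ω x < ε := fun x hx hxB =>
    not_le.1 fun h => absurd (hB x hx h) (not_le.2 hxB)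
  -- `u > B` forces a point into the strip `{δ < ε}`, and is preserved by the growth step
  have hiter : ∀ n : ℕ, ∃ x ∈ Ω, B < u x ∧
      (3 / 2 : ℝ) ^ n * (exp (u x₀) * bdist Ω x₀ ^ 2) ≤ exp (u x) * bdist Ω x ^ 2 := by
    intro n
    induction n with
    | zero => exact ⟨x₀, hx₀, hx₀B, by simp⟩
    | succ n ih =>
      obtain ⟨x, hx, hxB, hxn⟩ := ih
      obtain ⟨y, hy, hyu, hyd⟩ := hgrow x hx (hstrip x hx hxB)
      refine ⟨y, hy, by linarith, ?_⟩
      have hδ := hpos x hx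
      have he2 : (6 : ℝ) ≤ exp 2 := by
        have h1 := exp_one_gt_d9
        have : exp 2 = exp 1 * exp 1 := by rw [← exp_add]; norm_num
        nlinarith
      calc (3 / 2 : ℝ) ^ (n + 1) * (exp (u x₀) * bdist Ω x₀ ^ 2)
          = 3 / 2 * ((3 / 2 : ℝ) ^ n * (exp (u x₀) * bdist Ω x₀ ^ 2)) := by ring
        _ ≤ 3 / 2 * (exp (u x) * bdist Ω x ^ 2) := by gcongr
        _ = (exp (u x) * 6) * (bdist Ω x / 2) ^ 2 := by ring
        _ ≤ (exp (u x) * exp 2) * (bdist Ω x / 2) ^ 2 := by gcongr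
        _ = exp (u x + 2) * (bdist Ω x / 2) ^ 2 := by rw [exp_add]
        _ ≤ exp (u y) * bdist Ω y ^ 2 := by gcongr
  have hQ : 0 < exp (u x₀) * bdist Ω x₀ ^ 2 := mul_pos (exp_pos _) (pow_pos (hpos x₀ hx₀) 2)
  obtain ⟨n, hn⟩ := pow_unbounded_of_one_lt
    (4 * (4 * N + 8) / (exp (u x₀) * bdist Ω x₀ ^ 2)) (by norm_num : (1 : ℝ) < 3 / 2)
  obtain ⟨x, hx, hxB, hxn⟩ := hiter n
  have h1 := hupper x hx (hstrip x hx hxB)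
  rw [div_lt_iff₀ hQ] at hn
  linarith
end
end

section
/- Assume 0 < μ < C_H(Ω). Then equation (*) has at most one large solution: if U₁ and U₂ are both classical solutions of (*) tending to ∞ at ∂Ω, then U₁ = U₂ in Ω. -/
/-!
Write `δ` for the distance to the complement of `Ω`.

*Boundary behaviour.* Every solution satisfies the Keller–Osserman bound `u ≤ (2 + ε) log (2 / δ)`
near the boundary (`solution_le_log`), by comparison with `const - 2 log (R² - |y - x₀|²)` on balls.
A large solution satisfies `u ≥ 2 log (1 / δ) - C` (`log_le_large_solution`), by comparison with
`K + log (r² / (δ² + τ²))`, which is bounded and hence smaller than `u` close to the boundary; at a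
touching point `δ` is replaced by the distance to a nearest boundary point, which is smooth and
dominates `δ`. Consequently `U₁ ≤ (1 + ε) U₂` near the boundary for any solution `U₁`, any large
solution `U₂` and any `ε > 0` (`large_solution_ratio`).

*Energy.* Let `v = U₁ - (1 + ε) U₂`. Where `v > 0`, convexity of the exponential gives
`(1 + ε) e^{U₂} - e^{U₁} ≤ ε` (`exp_defect`), so `-Δv ≤ μ v / δ² + ε` there, and `v⁺` has compact
support in `Ω`. Testing Hardy's inequality with `(v⁺)^p` for `p > 1`, which is a `C¹` function, yields
`C_H ∫ (v⁺)^(2p) / δ² ≤ p² / (2p - 1) (μ ∫ (v⁺)^(2p) / δ² + ε ∫ (v⁺)^(2p-1))` (`energy_estimate`).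
For `p` close to `1` one has `μ p² / (2p - 1) < C_H`; since `(v⁺)^(2p-1) ≤ 1 + D² (v⁺)^(2p) / δ²` when
`δ ≤ D`, it follows that `∫ (v⁺)^(2p) / δ² ≤ C ε` for small `ε`. Letting `ε → 0` gives `U₁ ≤ U₂`
(`large_solution_le`), and the roles of `U₁` and `U₂` can be exchanged.
-/

open MeasureTheory Real Filter Topology Set

noncomputable section

/-- The Hardy constant of `Ω`: the infimum of the Rayleigh quotients
`∫ |∇φ|² / ∫ φ²/δ²` over nonzero test functions `φ ∈ C_c^∞(Ω)`. -/
def hardyConst {N : ℕ} (Ω : Set (Euc N)) : ℝ :=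
  sInf { r : ℝ | ∃ φ : Euc N → ℝ, ContDiff ℝ (⊤ : ℕ∞) φ ∧ HasCompactSupport φ ∧
    tsupport φ ⊆ Ω ∧ φ ≠ 0 ∧
    r = (∫ x in Ω, ‖gradient φ x‖ ^ 2) / (∫ x in Ω, (φ x) ^ 2 / (bdist Ω x) ^ 2) }

/-! ### The Laplacian and the maximum principle -/

lemma contDiffAt_fderiv_apply {N : ℕ} {f : Euc N → ℝ} {x : Euc N} (hf : ContDiffAt ℝ 2 f x)
    (v : Euc N) : ContDiffAt ℝ 1 (fun y => fderiv ℝ f y v) x :=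
  (hf.fderiv_right (m := 1) (by norm_num)).clm_apply contDiffAt_const

lemma lap_add_const_mul {N : ℕ} {f g : Euc N → ℝ} {x : Euc N} (c : ℝ)
    (hf : ContDiffAt ℝ 2 f x) (hg : ContDiffAt ℝ 2 g x) :
    lap (fun y => f y + c * g y) x = lap f x + c * lap g x := by
  unfold lap
  rw [Finset.mul_sum, ← Finset.sum_add_distrib]
  refine Finset.sum_congr rfl fun i _ => ?_
  have h1 : (fun y => fderiv ℝ (fun y => f y + c * g y) y (EuclideanSpace.single i 1)) =ᶠ[𝓝 x]
      fun y => fderiv ℝ f y (EuclideanSpace.single i 1) + c * fderiv ℝ g y (EuclideanSpace.single i 1) := by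
    filter_upwards [hf.eventually (by norm_num), hg.eventually (by norm_num)] with y hfy hgy
    have hf' := hfy.differentiableAt (by norm_num)
    have hg' := hgy.differentiableAt (by norm_num)
    have h := (hf'.hasFDerivAt.add (hg'.hasFDerivAt.const_mul c)).fderiv
    change fderiv ℝ (fun y => f y + c * g y) y = _ at h
    rw [h]
    simp
  rw [h1.fderiv_eq]
  have hf' := (contDiffAt_fderiv_apply hf (EuclideanSpace.single i 1)).differentiableAt (by norm_num)
  have hg' := (contDiffAt_fderiv_apply hg (EuclideanSpace.single i 1)).differentiableAt (by norm_num)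
  have h := (hf'.hasFDerivAt.add (hg'.hasFDerivAt.const_mul c)).fderiv
  change fderiv ℝ (fun y => fderiv ℝ f y (EuclideanSpace.single i 1) + c * fderiv ℝ g y (EuclideanSpace.single i 1)) x = _ at h
  rw [h]
  simp

lemma lap_congr {N : ℕ} {f g : Euc N → ℝ} {x : Euc N} (h : f =ᶠ[𝓝 x] g) : lap f x = lap g x := by
  unfold lap
  refine Finset.sum_congr rfl fun i _ => ?_
  have h1 : (fun y => fderiv ℝ f y (EuclideanSpace.single i 1)) =ᶠ[𝓝 x] fun y => fderiv ℝ g y (EuclideanSpace.single i 1) := by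
    filter_upwards [h.eventuallyEq_nhds] with y hy
    rw [hy.fderiv_eq]
  rw [h1.fderiv_eq]

lemma lap_nonpos_of_isLocalMax {N : ℕ} {f : Euc N → ℝ} {x : Euc N} (hf : ContDiffAt ℝ 2 f x)
    (h : IsLocalMax f x) : lap f x ≤ 0 := by
  unfold lap
  refine Finset.sum_nonpos fun i _ => ?_
  set e : Euc N := EuclideanSpace.single i (1 : ℝ) with he
  have hl : ∀ t : ℝ, HasDerivAt (fun t : ℝ => x + t • e) e t := fun t => by
    simpa using ((hasDerivAt_id t).smul_const e).const_add x
  have hcont : Continuous (fun t : ℝ => x + t • e) := by fun_prop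
  have ht : Tendsto (fun t : ℝ => x + t • e) (𝓝 0) (𝓝 x) := by
    simpa using hcont.tendsto 0
  set g : ℝ → ℝ := fun t => f (x + t • e) with hg
  have hd : deriv g =ᶠ[𝓝 0] fun t => fderiv ℝ f (x + t • e) e := by
    filter_upwards [ht.eventually (hf.eventually (by norm_num))] with t hft
    exact ((hft.differentiableAt (by norm_num)).hasFDerivAt.comp_hasDerivAt t (hl t)).deriv
  have hdd : deriv (deriv g) 0 = fderiv ℝ (fun y => fderiv ℝ f y e) x e := by
    rw [hd.deriv_eq]
    have h2 : HasFDerivAt (fun y => fderiv ℝ f y e) (fderiv ℝ (fun y => fderiv ℝ f y e) x)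
        (x + (0 : ℝ) • e) := by
      simpa using ((contDiffAt_fderiv_apply hf e).differentiableAt (by norm_num)).hasFDerivAt
    exact (h2.comp_hasDerivAt (0 : ℝ) (hl 0)).deriv
  have hmax : IsLocalMax g 0 := by
    have := ht.eventually h
    simpa [IsLocalMax, IsMaxFilter, hg] using this
  by_contra! hpos
  rw [← hdd] at hpos
  have hgc : ContinuousAt g 0 := by
    have : ContinuousAt f (x + (0 : ℝ) • e) := by simpa using hf.continuousAt
    exact ContinuousAt.comp (f := fun t : ℝ => x + t • e) this hcont.continuousAt
  have hmin : IsLocalMin g 0 := isLocalMin_of_deriv_deriv_pos hpos hmax.deriv_eq_zero hgc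
  -- A point that is both a local minimum and a local maximum has `g` locally constant around it.
  have hconst : g =ᶠ[𝓝 0] fun _ => g 0 := by
    filter_upwards [hmax, hmin] with t h1 h2
    exact le_antisymm h1 h2
  have : deriv g =ᶠ[𝓝 0] fun _ => (0 : ℝ) := by
    filter_upwards [hconst.eventuallyEq_nhds] with t h1
    rw [h1.deriv_eq, deriv_const]
  rw [this.deriv_eq, deriv_const] at hpos
  exact lt_irrefl _ hpos

lemma contDiff_quad {N : ℕ} (c σ : ℝ) (z : Euc N) {n : WithTop ℕ∞} :
    ContDiff ℝ n (fun y : Euc N => c + σ * ‖y - z‖ ^ 2) :=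
  contDiff_const.add (contDiff_const.mul ((contDiff_id.sub contDiff_const).norm_sq ℝ))

lemma contDiffAt_log_quad {N : ℕ} (c σ : ℝ) (z x : Euc N) (hx : c + σ * ‖x - z‖ ^ 2 ≠ 0)
    {n : WithTop ℕ∞} :
    ContDiffAt ℝ n (fun y : Euc N => Real.log (c + σ * ‖y - z‖ ^ 2)) x :=
  (contDiff_quad c σ z).contDiffAt.log hx

lemma hasFDerivAt_quad {N : ℕ} (c σ : ℝ) (z y : Euc N) :
    HasFDerivAt (fun y : Euc N => c + σ * ‖y - z‖ ^ 2)
      ((2 * σ) • (innerSL ℝ (y - z))) y := by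
  have h := (((hasFDerivAt_id (𝕜 := ℝ) y).sub_const z).norm_sq.const_mul σ).const_add c
  refine h.congr_fderiv ?_
  ext v
  simp
  ring

/-- The Laplacian of `log (c + σ |y - z|²)`, the profile of both barriers used below. -/
lemma lap_log_quad {N : ℕ} (c σ : ℝ) (z x : Euc N) (hx : c + σ * ‖x - z‖ ^ 2 ≠ 0) :
    lap (fun y : Euc N => Real.log (c + σ * ‖y - z‖ ^ 2)) x =
      2 * N * σ / (c + σ * ‖x - z‖ ^ 2)
        - 4 * σ ^ 2 * ‖x - z‖ ^ 2 / (c + σ * ‖x - z‖ ^ 2) ^ 2 := by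
  have hterm : ∀ i : Fin N, fderiv ℝ (fun y => fderiv ℝ
      (fun y : Euc N => Real.log (c + σ * ‖y - z‖ ^ 2)) y (EuclideanSpace.single i 1)) x (EuclideanSpace.single i 1) =
      2 * σ / (c + σ * ‖x - z‖ ^ 2)
        - 4 * σ ^ 2 / (c + σ * ‖x - z‖ ^ 2) ^ 2 * ((x - z) i) ^ 2 := by
    intro i
    have h1 : (fun y => fderiv ℝ (fun y : Euc N => Real.log (c + σ * ‖y - z‖ ^ 2)) y (EuclideanSpace.single i 1))
        =ᶠ[𝓝 x] fun y => (2 * σ * (y - z) i) * (c + σ * ‖y - z‖ ^ 2)⁻¹ := by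
      have : ∀ᶠ y in 𝓝 x, c + σ * ‖y - z‖ ^ 2 ≠ 0 :=
        (contDiff_quad c σ z (n := 0)).continuous.continuousAt.eventually_ne hx
      filter_upwards [this] with y hy
      rw [((hasFDerivAt_quad c σ z y).log hy).fderiv]
      simp [EuclideanSpace.inner_single_right]
      ring
    have hc : HasFDerivAt (fun y : Euc N => 2 * σ * (y - z) i)
        ((2 * σ) • (EuclideanSpace.proj i : Euc N →L[ℝ] ℝ)) x := by
      have := (((EuclideanSpace.proj i : Euc N →L[ℝ] ℝ).hasFDerivAt (x := x)).sub_const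
        (z i)).const_mul (2 * σ)
      exact this
    have hq := (hasDerivAt_inv hx).comp_hasFDerivAt x (hasFDerivAt_quad c σ z x)
    have h2 := hc.mul hq
    rw [h1.fderiv_eq]
    change HasFDerivAt (fun y : Euc N => (2 * σ * (y - z) i) * (c + σ * ‖y - z‖ ^ 2)⁻¹) _ x at h2
    rw [h2.fderiv]
    simp [EuclideanSpace.inner_single_right]
    field_simp
    ring
  unfold lap
  rw [Finset.sum_congr rfl fun i _ => hterm i, Finset.sum_sub_distrib, ← Finset.mul_sum,
    EuclideanSpace.norm_sq_eq (x - z)]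
  simp
  ring

/-! ### The distance to the boundary -/

lemma compl_nonempty_of_isBounded {N : ℕ} (hN : 2 ≤ N) {Ω : Set (Euc N)}
    (hΩb : Bornology.IsBounded Ω) : Ωᶜ.Nonempty := by
  have : Nontrivial (Euc N) := by
    have : Nonempty (Fin N) := ⟨⟨0, by omega⟩⟩
    infer_instance
  rw [Set.nonempty_compl]
  rintro rfl
  exact NormedSpace.unbounded_univ ℝ (Euc N) hΩb

lemma bdist_pos {N : ℕ} {Ω : Set (Euc N)} (hΩo : IsOpen Ω) (hc : Ωᶜ.Nonempty) {x : Euc N}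
    (hx : x ∈ Ω) : 0 < bdist Ω x := by
  rw [bdist, ← Metric.infDist_pos_iff_notMem_closure hc, hΩo.isClosed_compl.closure_eq]
  simpa using hx

lemma mem_of_bdist_pos {N : ℕ} {Ω : Set (Euc N)} {x : Euc N} (h : 0 < bdist Ω x) : x ∈ Ω := by
  by_contra hx
  rw [bdist, Metric.infDist_zero_of_mem hx] at h
  exact lt_irrefl _ h

lemma continuous_bdist {N : ℕ} (Ω : Set (Euc N)) : Continuous (bdist Ω) :=
  Metric.continuous_infDist_pt _

lemma isCompact_bdist_ge {N : ℕ} {Ω : Set (Euc N)} (hΩb : Bornology.IsBounded Ω) {c : ℝ}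
    (hc : 0 < c) : IsCompact {x | c ≤ bdist Ω x} :=
  Metric.isCompact_of_isClosed_isBounded (isClosed_le continuous_const (continuous_bdist Ω))
    (hΩb.subset fun _ hx => mem_of_bdist_pos (hc.trans_le hx))

lemma bdist_le_of_isBounded {N : ℕ} {Ω : Set (Euc N)} (hΩb : Bornology.IsBounded Ω)
    (hc : Ωᶜ.Nonempty) : ∃ D > 0, ∀ x ∈ Ω, bdist Ω x ≤ D := by
  obtain ⟨z, hz⟩ := hc
  obtain ⟨R, hR⟩ := hΩb.subset_closedBall z
  refine ⟨max R 1, by positivity, fun x hx => ?_⟩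
  exact (Metric.infDist_le_dist_of_mem hz).trans ((hR hx).trans (le_max_left _ _))

/-! ### Boundary behaviour of large solutions -/

lemma exists_affine_lt_exp (a b : ℝ) : ∃ s₀ > 0, ∀ s ≥ s₀, a * s + b < Real.exp s := by
  refine ⟨2 * (|a| + |b|) + 2, by positivity, fun s hs => ?_⟩
  have ha := abs_nonneg a
  have hb := abs_nonneg b
  have h1 := Real.quadratic_le_exp_of_nonneg (x := s) (by linarith)
  have h2 : a * s ≤ |a| * s := mul_le_mul_of_nonneg_right (le_abs_self a) (by linarith)
  have h3 : |b| ≤ |b| * s := le_mul_of_one_le_right hb (by linarith)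
  have h4 := le_abs_self b
  nlinarith

/-- A Keller–Osserman bound: a solution is at most `(2 + ε) log (2 / δ)` near the boundary. The
barrier on the ball of radius `R = δ(x₀) / 2` around `x₀` is `const - 2 log (R² - |y - x₀|²)`. -/
lemma solution_le_log {N : ℕ} {Ω : Set (Euc N)} (hΩo : IsOpen Ω) (hc : Ωᶜ.Nonempty)
    {μ : ℝ} (hμ : 0 < μ) {u : Euc N → ℝ} (hu : IsSolution μ Ω u) {ε : ℝ} (hε : 0 < ε) :
    ∃ r > 0, ∀ x ∈ Ω, bdist Ω x < r → u x ≤ (2 + ε) * (Real.log 2 - Real.log (bdist Ω x)) := by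
  obtain ⟨s₀, hs₀, hexp⟩ := exists_affine_lt_exp (μ * (1 + 2 / ε)) (μ * 2 + (4 * N + 8))
  refine ⟨Real.exp (-(s₀ / ε)), Real.exp_pos _, fun x hx hxr => ?_⟩
  by_contra! hlt
  have hδ := bdist_pos hΩo hc hx
  set d := bdist Ω x with hd
  set R := d / 2 with hR
  have hRpos : 0 < R := by positivity
  set L := Real.log 2 - Real.log d with hL
  have hLR : Real.log R = -L := by
    rw [hR, Real.log_div hδ.ne' two_ne_zero, hL]; ring
  have hLs : s₀ / ε < L := by
    have h1 : Real.log d < -(s₀ / ε) := by rwa [Real.log_lt_iff_lt_exp hδ]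
    have h2 : 0 < Real.log 2 := Real.log_pos (by norm_num)
    linarith
  have hLε : s₀ < ε * L := by rwa [div_lt_iff₀' hε] at hLs
  have hL0 : 0 < L := lt_trans (by positivity) hLs
  -- The ball of radius `R` stays at distance at least `R` from the complement of `Ω`.
  have hball : ∀ y ∈ Metric.closedBall x R, R ≤ bdist Ω y := by
    intro y hy
    have h1 : d ≤ bdist Ω y + dist x y := Metric.infDist_le_infDist_add_dist
    rw [Metric.mem_closedBall, dist_comm] at hy
    linarith
  set q : Euc N → ℝ := fun y => R ^ 2 + (-1) * ‖y - x‖ ^ 2 with hq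
  have hqc : Continuous q := (contDiff_quad (R ^ 2) (-1) x (n := 0)).continuous
  have huc : ContinuousOn u (Metric.closedBall x R) :=
    hu.1.continuousOn.mono fun y hy => mem_of_bdist_pos (hRpos.trans_le (hball y hy))
  have hfc : ContinuousOn (fun y => q y ^ 2 * Real.exp (u y)) (Metric.closedBall x R) :=
    (hqc.pow 2).continuousOn.mul (Real.continuous_exp.comp_continuousOn huc)
  obtain ⟨y, hy, hmax⟩ := (isCompact_closedBall x R).exists_isMaxOn
    ⟨x, Metric.mem_closedBall_self hRpos.le⟩ hfc
  have hyδ := hball y hy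
  have hyΩ : y ∈ Ω := mem_of_bdist_pos (hRpos.trans_le hyδ)
  have hfx : R ^ 4 * Real.exp (u x) ≤ q y ^ 2 * Real.exp (u y) := by
    have := hmax (Metric.mem_closedBall_self hRpos.le)
    simp only [mem_ofPred_eq, hq, sub_self, norm_zero] at this
    linarith
  have hq0 : 0 ≤ q y := by
    rw [Metric.mem_closedBall, dist_eq_norm] at hy
    have := pow_le_pow_left₀ (norm_nonneg _) hy 2
    simp only [hq]; linarith
  have hqpos : 0 < q y := by
    rcases hq0.lt_or_eq with h | h
    · exact h
    · rw [← h] at hfx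
      have : 0 < R ^ 4 * Real.exp (u x) := by positivity
      norm_num at hfx
      linarith
  have hqle : q y ≤ R ^ 2 := by
    simp only [hq]; nlinarith [sq_nonneg ‖y - x‖]
  have huy : ContDiffAt ℝ 2 u y := hu.1.contDiffAt (hΩo.mem_nhds hyΩ)
  have hloc : IsLocalMax (fun y' => u y' + 2 * Real.log (q y')) y := by
    have hev : ∀ᶠ y' in 𝓝 y, 0 < q y' := hqc.continuousAt.eventually (lt_mem_nhds hqpos)
    filter_upwards [hev] with y' hy'
    have hmem : y' ∈ Metric.closedBall x R := by
      rw [Metric.mem_closedBall, dist_eq_norm]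
      simp only [hq] at hy'
      exact (pow_le_pow_iff_left₀ (norm_nonneg _) hRpos.le two_ne_zero).mp (by linarith)
    have h1 : q y' ^ 2 * Real.exp (u y') ≤ q y ^ 2 * Real.exp (u y) := hmax hmem
    have h2 := Real.log_le_log (by positivity) h1
    rw [Real.log_mul (by positivity) (by positivity), Real.log_mul (by positivity) (by positivity),
      Real.log_exp, Real.log_exp, Real.log_pow, Real.log_pow] at h2
    push_cast at h2
    linarith
  have hlogC : ContDiffAt ℝ 2 (fun y' => Real.log (q y')) y :=
    contDiffAt_log_quad (R ^ 2) (-1) x y hqpos.ne'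
  have hlap := lap_nonpos_of_isLocalMax (huy.add (contDiffAt_const.mul hlogC)) hloc
  rw [lap_add_const_mul 2 huy hlogC, lap_log_quad (R ^ 2) (-1) x y hqpos.ne'] at hlap
  have heq := hu.2 y hyΩ
  change lap u y + 2 * (2 * N * (-1) / q y - 4 * (-1) ^ 2 * ‖y - x‖ ^ 2 / q y ^ 2) ≤ 0 at hlap
  have hyx : ‖y - x‖ ^ 2 ≤ R ^ 2 := by
    have : q y = R ^ 2 + (-1) * ‖y - x‖ ^ 2 := rfl
    linarith
  -- In the scaled quantities `m = q / R²` and `s = log (q² eᵘ / R²)` the inequality reads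
  -- `eˢ ≤ μ m² u⁺ + 4 N + 8`.
  set m := q y / R ^ 2 with hm
  have hmpos : 0 < m := by positivity
  have hm1 : m ≤ 1 := by rw [hm, div_le_one (by positivity)]; exact hqle
  have hqm : q y = m * R ^ 2 := by rw [hm]; field_simp
  set s := u y + 2 * Real.log m - 2 * L with hs
  have hexps : Real.exp s = m ^ 2 * R ^ 2 * Real.exp (u y) := by
    have e1 : Real.exp (2 * Real.log m) = m ^ 2 := by
      rw [two_mul, Real.exp_add, Real.exp_log hmpos, sq]
    have e2 : Real.exp (-(2 * L)) = R ^ 2 := by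
      rw [show -(2 * L) = Real.log R + Real.log R by rw [hLR]; ring, Real.exp_add,
        Real.exp_log hRpos, sq]
    rw [hs, sub_eq_add_neg, Real.exp_add, Real.exp_add, e1, e2]
    ring
  have hsε : ε * L < s := by
    have h1 : R ^ 2 * Real.exp (u x) ≤ Real.exp s := by
      rw [hexps]
      rw [hqm] at hfx
      have hR2 : 0 < R ^ 2 := by positivity
      refine le_of_mul_le_mul_left ?_ hR2
      linarith
    have h2 := Real.log_le_log (by positivity) h1
    rw [Real.log_exp, Real.log_mul (by positivity) (by positivity), Real.log_exp, Real.log_pow,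
      hLR] at h2
    push_cast at h2
    linarith
  have hmain : Real.exp s ≤ μ * (m ^ 2 * max (u y) 0) + (4 * N + 8) := by
    have h1 : μ / bdist Ω y ^ 2 * u y ≤ μ / R ^ 2 * max (u y) 0 := by
      calc μ / bdist Ω y ^ 2 * u y ≤ μ / bdist Ω y ^ 2 * max (u y) 0 := by
            gcongr; exact le_max_left _ _
        _ ≤ μ / R ^ 2 * max (u y) 0 := by gcongr
    have h2 : 4 * N / q y + 8 * ‖y - x‖ ^ 2 / q y ^ 2 ≤ (4 * N + 8) * R ^ 2 / q y ^ 2 := by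
      have h3 : 4 * N / q y = 4 * N * q y / q y ^ 2 := by field_simp
      rw [h3, ← add_div]
      gcongr
      have : (4 * N : ℝ) * q y ≤ 4 * N * R ^ 2 := by gcongr
      linarith
    have h4 : Real.exp (u y) ≤ μ / R ^ 2 * max (u y) 0 + (4 * N + 8) * R ^ 2 / q y ^ 2 := by
      have h5 : 2 * (2 * N * (-1) / q y - 4 * (-1) ^ 2 * ‖y - x‖ ^ 2 / q y ^ 2)
        = -(4 * N / q y + 8 * ‖y - x‖ ^ 2 / q y ^ 2) := by ring
      linarith
    rw [hexps]
    calc m ^ 2 * R ^ 2 * Real.exp (u y)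
        ≤ m ^ 2 * R ^ 2 * (μ / R ^ 2 * max (u y) 0 + (4 * N + 8) * R ^ 2 / q y ^ 2) := by gcongr
      _ = _ := by rw [hqm]; field_simp
  have hs0 : 0 < s := lt_trans (by positivity) hsε
  have hmu : m ^ 2 * max (u y) 0 ≤ (1 + 2 / ε) * s + 2 := by
    have hL2 : 2 * L ≤ 2 / ε * s := by
      rw [div_mul_eq_mul_div, le_div_iff₀ hε]; linarith
    have hm2 : m ^ 2 ≤ 1 := pow_le_one₀ hmpos.le hm1
    rcases le_total (u y) 0 with h | h
    · rw [max_eq_right h]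
      have : 0 ≤ (1 + 2 / ε) * s := by positivity
      linarith
    · rw [max_eq_left h]
      have hlog : -Real.log m * m ≤ 1 := by
        have h1 := Real.log_le_sub_one_of_pos (inv_pos.mpr hmpos)
        rw [Real.log_inv] at h1
        have h2 := mul_le_mul_of_nonneg_right h1 hmpos.le
        rw [sub_mul, inv_mul_cancel₀ hmpos.ne'] at h2
        linarith
      have hlog' : -Real.log m * m ^ 2 ≤ 1 := by
        have : 0 ≤ -Real.log m := by
          have := Real.log_nonpos hmpos.le hm1
          linarith
        nlinarith
      have : u y = s + 2 * L - 2 * Real.log m := by rw [hs]; ring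
      have h5 : m ^ 2 * (s + 2 * L) ≤ s + 2 * L := mul_le_of_le_one_left (by positivity) hm2
      rw [this]
      linarith
  have hfin := hexp s (by linarith)
  have := mul_le_mul_of_nonneg_left hmu hμ.le
  linarith

/-- The barrier `-log (τ² + |x - z|²)` does not touch `l u` from below at a point `y` with
`|y - z| = δ(y)`, when `l > 1` and `u y` is large but `e^{l u} ≤ 1 / δ²` there: it is a strict
subsolution at `y`, and a local maximum of the difference would contradict `Δ ≤ 0`. -/
lemma barrier_not_touching {N : ℕ} {Ω : Set (Euc N)} {μ τ d l : ℝ} (hτ : 0 < τ)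
    {u : Euc N → ℝ} {y z : Euc N} (hu : ContDiffOn ℝ 2 u Ω) (hΩo : IsOpen Ω) (hyΩ : y ∈ Ω)
    (heq : -lap u y - μ / d ^ 2 * u y + Real.exp (u y) = 0) (hd : 0 < d) (hyz : d = ‖y - z‖)
    (hl1 : 1 < l) (hu1 : 1 ≤ u y) (hs : 2 * N + 1 < μ * (l * u y))
    (hexp : Real.exp (l * u y) ≤ 1 / d ^ 2)
    (hloc : IsLocalMax (fun x => -Real.log (τ ^ 2 + 1 * ‖x - z‖ ^ 2) + (-l) * u x) y) : False := by
  have huy : ContDiffAt ℝ 2 u y := hu.contDiffAt (hΩo.mem_nhds hyΩ)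
  have hq : τ ^ 2 + 1 * ‖y - z‖ ^ 2 ≠ 0 := by positivity
  have hlogC : ContDiffAt ℝ 2 (fun x => Real.log (τ ^ 2 + 1 * ‖x - z‖ ^ 2)) y :=
    contDiffAt_log_quad (τ ^ 2) 1 z y hq
  have hlap := lap_nonpos_of_isLocalMax (hlogC.neg.add (contDiffAt_const.mul huy)) hloc
  have hneg : lap (fun x => -Real.log (τ ^ 2 + 1 * ‖x - z‖ ^ 2)) y
      = - lap (fun x => Real.log (τ ^ 2 + 1 * ‖x - z‖ ^ 2)) y := by
    have h := lap_add_const_mul (x := y) (f := fun _ => 0) (-1) contDiffAt_const hlogC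
    have h0 : lap (fun _ : Euc N => (0 : ℝ)) y = 0 := by simp [lap]
    rw [h0] at h
    simpa using h
  rw [lap_add_const_mul (-l) hlogC.neg huy, hneg, lap_log_quad (τ ^ 2) 1 z y hq, ← hyz] at hlap
  have hb1 : 2 * N * 1 / (τ ^ 2 + 1 * d ^ 2) ≤ 2 * N / d ^ 2 := by
    rw [mul_one, one_mul]
    gcongr
    exact le_add_of_nonneg_left (sq_nonneg τ)
  have hb2 : 0 ≤ 4 * (1 : ℝ) ^ 2 * d ^ 2 / (τ ^ 2 + 1 * d ^ 2) ^ 2 := by positivity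
  have hb3 : l * Real.exp (u y) ≤ Real.exp (l * u y) := by
    have h1 : l ≤ Real.exp (l - 1) := by linarith [Real.add_one_le_exp (l - 1)]
    calc l * Real.exp (u y) ≤ Real.exp (l - 1) * Real.exp (u y) := by gcongr
      _ = Real.exp (l - 1 + u y) := (Real.exp_add _ _).symm
      _ ≤ Real.exp (l * u y) := by
        refine Real.exp_le_exp.mpr ?_
        nlinarith
  have hb6 : 2 * N / d ^ 2 + 1 / d ^ 2 < l * (μ / d ^ 2 * u y) := by
    have : l * (μ / d ^ 2 * u y) = μ * (l * u y) / d ^ 2 := by ring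
    rw [this, ← add_div]
    gcongr
  have hb7 : lap u y = Real.exp (u y) - μ / d ^ 2 * u y := by linarith
  rw [hb7, neg_mul, mul_sub] at hlap
  linarith

/-- The matching lower bound: a large solution is at least `2 log (1 / δ) - C` near the boundary.
For each `τ > 0` the bounded function `K + log (r² / (δ² + τ²))` is, in the viscosity sense, a
subsolution near the boundary; it is compared with `u` by maximising the quotient. At a maximum
point `y₀` with nearest point `z ∉ Ω`, the bound `δ(y) ≤ |y - z|` replaces `δ` by the smooth function
`|y - z|`. -/
lemma log_le_large_solution {N : ℕ} {Ω : Set (Euc N)} (hΩo : IsOpen Ω) (hc : Ωᶜ.Nonempty)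
    (hΩb : Bornology.IsBounded Ω) {μ : ℝ} (hμ : 0 < μ) {u : Euc N → ℝ} (hu : IsSolution μ Ω u)
    (hul : IsLarge Ω u) :
    ∃ r > 0, ∃ C : ℝ, ∀ x ∈ Ω, bdist Ω x < r → -2 * Real.log (bdist Ω x) - C ≤ u x := by
  -- `K ≥ 1` makes `l eᵘ ≤ e^{l u}` available for `l > 1`, and `μ K > 2 N` absorbs the Laplacian of the barrier.
  obtain ⟨K, hK1, hμK⟩ : ∃ K : ℝ, 1 ≤ K ∧ 2 * N + 1 < μ * K := by
    refine ⟨1 + (2 * N + 1) / μ, ?_, ?_⟩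
    · have : 0 ≤ (2 * N + 1) / μ := by positivity
      linarith
    · rw [mul_add, mul_div_cancel₀ _ hμ.ne']; linarith
  obtain ⟨e, he, hue⟩ := hul K
  set r : ℝ := min (e / 2) (Real.exp (-K / 2)) with hr
  have hrpos : 0 < r := by positivity
  have hre : r < e := lt_of_le_of_lt (min_le_left _ _) (by linarith)
  have hrK : Real.exp K * r ^ 2 ≤ 1 := by
    have h1 : r ^ 2 ≤ Real.exp (-K / 2) ^ 2 := by gcongr; exact min_le_right _ _
    have h2 : Real.exp (-K / 2) ^ 2 = Real.exp (-K) := by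
      rw [← Real.exp_nat_mul]; congr 1; push_cast; ring
    rw [h2] at h1
    calc Real.exp K * r ^ 2 ≤ Real.exp K * Real.exp (-K) := by gcongr
      _ = 1 := by rw [← Real.exp_add]; simp
  have huK : ∀ x ∈ Ω, bdist Ω x ≤ r → K ≤ u x := fun x hx h => hue x hx (by linarith)
  have key : ∀ τ > 0, ∀ x ∈ Ω, bdist Ω x ≤ r →
      K + 2 * Real.log r - Real.log (bdist Ω x ^ 2 + τ ^ 2) ≤ u x := by
    intro τ hτ x₁ hx₁ hx₁r
    by_contra! hlt
    set s : Euc N → ℝ := fun x => K + 2 * Real.log r - Real.log (bdist Ω x ^ 2 + τ ^ 2) with hs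
    have hsc : Continuous s := by
      refine continuous_const.sub (Continuous.log ?_ fun x => by positivity)
      exact ((continuous_bdist Ω).pow 2).add continuous_const
    obtain ⟨ε₁, hε₁, huε⟩ := hul (K + 2 * Real.log r - Real.log (τ ^ 2))
    have hs_le : ∀ x, s x ≤ K + 2 * Real.log r - Real.log (τ ^ 2) := by
      intro x
      have : Real.log (τ ^ 2) ≤ Real.log (bdist Ω x ^ 2 + τ ^ 2) :=
        Real.log_le_log (by positivity) (by nlinarith [sq_nonneg (bdist Ω x)])
      simp only [hs]; linarith
    have hA : IsCompact ({x | ε₁ / 2 ≤ bdist Ω x} ∩ {x | bdist Ω x ≤ r}) :=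
      (isCompact_bdist_ge hΩb (by positivity)).inter_right
        (isClosed_le (continuous_bdist Ω) continuous_const)
    have hAΩ : ∀ x ∈ {x | ε₁ / 2 ≤ bdist Ω x} ∩ {x | bdist Ω x ≤ r}, x ∈ Ω :=
      fun x hx => mem_of_bdist_pos (lt_of_lt_of_le (by positivity) hx.1)
    have hx₁A : x₁ ∈ {x | ε₁ / 2 ≤ bdist Ω x} ∩ {x | bdist Ω x ≤ r} := by
      refine ⟨?_, hx₁r⟩
      by_contra h
      simp only [mem_ofPred_eq, not_le] at h
      have h1 := huε x₁ hx₁ (by linarith)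
      have h2 := hs_le x₁
      simp only [hs] at h2
      linarith
    have hcont : ContinuousOn (fun x => s x / u x)
        ({x | ε₁ / 2 ≤ bdist Ω x} ∩ {x | bdist Ω x ≤ r}) := by
      refine hsc.continuousOn.div (hu.1.continuousOn.mono hAΩ) fun x hx => ?_
      have := huK x (hAΩ x hx) hx.2
      linarith
    obtain ⟨y, hy, hmax⟩ := hA.exists_isMaxOn ⟨x₁, hx₁A⟩ hcont
    have hyΩ := hAΩ y hy
    set l := s y / u y with hl
    have hl1 : 1 < l := by
      have h1 : s x₁ / u x₁ ≤ l := hmax hx₁A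
      have h2 : 1 < s x₁ / u x₁ := by
        rw [one_lt_div (by linarith [huK x₁ hx₁ hx₁r])]
        exact hlt
      linarith
    have huyK := huK y hyΩ hy.2
    have hsy : s y = l * u y := by rw [hl, div_mul_cancel₀ _ (by linarith)]
    have hsuy : u y < s y := by rw [hsy]; nlinarith
    -- The maximum is not attained on the boundary of the strip.
    have hyr : bdist Ω y < r := by
      refine lt_of_le_of_ne hy.2 fun h => ?_
      have h1 : Real.log (r ^ 2) ≤ Real.log (bdist Ω y ^ 2 + τ ^ 2) :=
        Real.log_le_log (by positivity) (by rw [h]; nlinarith)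
      rw [Real.log_pow] at h1
      push_cast at h1
      simp only [hs] at hsuy
      linarith
    have hyε : ε₁ / 2 < bdist Ω y := by
      refine lt_of_le_of_ne hy.1 fun h => ?_
      have h1 := huε y hyΩ (by rw [← h]; linarith)
      linarith [hs_le y]
    obtain ⟨z, hz, hyz⟩ := hΩo.isClosed_compl.exists_infDist_eq_dist hc y
    change bdist Ω y = dist y z at hyz
    rw [dist_eq_norm] at hyz
    have hloc : IsLocalMax
        (fun x => -Real.log (τ ^ 2 + 1 * ‖x - z‖ ^ 2) + (-l) * u x) y := by
      have h1 : ∀ᶠ x in 𝓝 y, bdist Ω x < r :=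
        (continuous_bdist Ω).continuousAt.eventually (gt_mem_nhds hyr)
      have h2 : ∀ᶠ x in 𝓝 y, ε₁ / 2 < bdist Ω x :=
        (continuous_bdist Ω).continuousAt.eventually (lt_mem_nhds hyε)
      filter_upwards [h1, h2] with x hx1 hx2
      have hxA : x ∈ {x | ε₁ / 2 ≤ bdist Ω x} ∩ {x | bdist Ω x ≤ r} := ⟨hx2.le, hx1.le⟩
      have hxu := huK x (hAΩ x hxA) hx1.le
      have h3 : s x / u x ≤ l := hmax hxA
      rw [div_le_iff₀ (by linarith)] at h3
      have h4 : bdist Ω x ≤ ‖x - z‖ := by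
        rw [← dist_eq_norm]; exact Metric.infDist_le_dist_of_mem hz
      have h5 : Real.log (bdist Ω x ^ 2 + τ ^ 2) ≤ Real.log (τ ^ 2 + 1 * ‖x - z‖ ^ 2) := by
        refine Real.log_le_log (by positivity) ?_
        have : bdist Ω x ^ 2 ≤ ‖x - z‖ ^ 2 := pow_le_pow_left₀ Metric.infDist_nonneg h4 2
        linarith
      have h6 : Real.log (bdist Ω y ^ 2 + τ ^ 2) = Real.log (τ ^ 2 + 1 * ‖y - z‖ ^ 2) := by
        rw [hyz]; congr 1; ring
      simp only [hs] at h3 hsy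
      linarith
    have hb4 : Real.exp (s y) ≤ 1 / bdist Ω y ^ 2 := by
      have h1 : Real.exp (s y) = Real.exp K * r ^ 2 / (bdist Ω y ^ 2 + τ ^ 2) := by
        simp only [hs]
        rw [Real.exp_sub, Real.exp_add, Real.exp_log (by positivity), two_mul, Real.exp_add,
          Real.exp_log hrpos, sq r]
      have hδ := bdist_pos hΩo hc hyΩ
      rw [h1]
      gcongr
      exact le_add_of_nonneg_right (sq_nonneg τ)
    rw [hsy] at hb4
    refine barrier_not_touching hτ hu.1 hΩo hyΩ (hu.2 y hyΩ) (bdist_pos hΩo hc hyΩ) hyz hl1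
      (hK1.trans huyK) ?_ hb4 hloc
    rw [← hsy]
    have := mul_le_mul_of_nonneg_left (huyK.trans hsuy.le) hμ.le
    linarith
  refine ⟨r, hrpos, Real.log 2 - K - 2 * Real.log r, fun x hx hxr => ?_⟩
  have hδ := bdist_pos hΩo hc hx
  -- The choice `τ = δ(x)` spares the limit `τ → 0`.
  have h := key (bdist Ω x) hδ x hx hxr.le
  rw [← two_mul, Real.log_mul two_ne_zero (by positivity), Real.log_pow] at h
  push_cast at h
  linarith

/-- Large solutions are asymptotic to each other: `U₁ ≤ (1 + ε) U₂` near the boundary. -/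
lemma large_solution_ratio {N : ℕ} {Ω : Set (Euc N)} (hΩo : IsOpen Ω) (hc : Ωᶜ.Nonempty)
    (hΩb : Bornology.IsBounded Ω) {μ : ℝ} (hμ : 0 < μ) {U₁ U₂ : Euc N → ℝ}
    (h₁ : IsSolution μ Ω U₁) (h₂ : IsSolution μ Ω U₂) (h₂' : IsLarge Ω U₂) {ε : ℝ} (hε : 0 < ε) :
    ∃ r > 0, ∀ x ∈ Ω, bdist Ω x < r → U₁ x ≤ (1 + ε) * U₂ x := by
  obtain ⟨r₁, hr₁, hu⟩ := solution_le_log hΩo hc hμ h₁ hε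
  obtain ⟨r₂, hr₂, C, hl⟩ := log_le_large_solution hΩo hc hΩb hμ h₂ h₂'
  set M := ((2 + ε) * Real.log 2 + (1 + ε) * C) / ε with hM
  refine ⟨min (min r₁ r₂) (Real.exp (-M)), by positivity, fun x hx hxr => ?_⟩
  have hδ := bdist_pos hΩo hc hx
  have h1 := hu x hx (hxr.trans_le ((min_le_left _ _).trans (min_le_left _ _)))
  have h2 := hl x hx (hxr.trans_le ((min_le_left _ _).trans (min_le_right _ _)))
  have h3 : Real.log (bdist Ω x) < -M :=
    (Real.log_lt_iff_lt_exp hδ).mpr (hxr.trans_le (min_le_right _ _))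
  have h4 : (2 + ε) * Real.log 2 + (1 + ε) * C ≤ ε * (-Real.log (bdist Ω x)) := by
    have : M ≤ -Real.log (bdist Ω x) := by linarith
    rw [hM, div_le_iff₀' hε] at this
    exact this
  have h5 := mul_le_mul_of_nonneg_left h2 (by linarith : (0 : ℝ) ≤ 1 + ε)
  linarith

/-! ### Hardy's inequality for `C¹` functions -/

lemma exists_le_bdist_of_isCompact {N : ℕ} {Ω K : Set (Euc N)} (hΩo : IsOpen Ω)
    (hc : Ωᶜ.Nonempty) (hK : IsCompact K) (hKΩ : K ⊆ Ω) : ∃ c > 0, ∀ x ∈ K, c ≤ bdist Ω x := by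
  rcases K.eq_empty_or_nonempty with rfl | hne
  · exact ⟨1, one_pos, by simp⟩
  · obtain ⟨x, hx, hmin⟩ := hK.exists_isMinOn hne (continuous_bdist Ω).continuousOn
    exact ⟨bdist Ω x, bdist_pos hΩo hc (hKΩ hx), fun y hy => hmin hy⟩

lemma norm_gradient {N : ℕ} (f : Euc N → ℝ) (x : Euc N) : ‖gradient f x‖ = ‖fderiv ℝ f x‖ := by
  simp [gradient]

lemma norm_fderiv_sq {N : ℕ} (f : Euc N → ℝ) (x : Euc N) :
    ‖fderiv ℝ f x‖ ^ 2 = ∑ i : Fin N, (fderiv ℝ f x (EuclideanSpace.single i 1)) ^ 2 := by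
  rw [← norm_gradient, EuclideanSpace.norm_sq_eq]
  refine Finset.sum_congr rfl fun i _ => ?_
  have h : inner ℝ (gradient f x) (EuclideanSpace.single i (1 : ℝ))
      = fderiv ℝ f x (EuclideanSpace.single i 1) := by
    simp [gradient]
  rw [← h, EuclideanSpace.inner_single_right]
  simp

lemma hardy_smooth {N : ℕ} {Ω : Set (Euc N)} {φ : Euc N → ℝ}
    (hφ : ContDiff ℝ (⊤ : ℕ∞) φ) (hcs : HasCompactSupport φ) (hsub : tsupport φ ⊆ Ω) :
    hardyConst Ω * ∫ x in Ω, (φ x) ^ 2 / (bdist Ω x) ^ 2 ≤ ∫ x in Ω, ‖gradient φ x‖ ^ 2 := by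
  have hnum : 0 ≤ ∫ x in Ω, ‖gradient φ x‖ ^ 2 := integral_nonneg fun x => by positivity
  have hden : 0 ≤ ∫ x in Ω, (φ x) ^ 2 / (bdist Ω x) ^ 2 := integral_nonneg fun x => by positivity
  rcases hden.eq_or_lt with h0 | hpos
  · rw [← h0, mul_zero]; exact hnum
  · rw [← le_div_iff₀ hpos]
    refine csInf_le ⟨0, ?_⟩ ⟨φ, hφ, hcs, hsub, ?_, rfl⟩
    · rintro _ ⟨ψ, -, -, -, -, rfl⟩
      exact div_nonneg (integral_nonneg fun x => by positivity)
        (integral_nonneg fun x => by positivity)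
    · rintro rfl
      simp at hpos

/-- Mollification in the `C¹` norm with supports in a fixed compact subset of `Ω`. -/
lemma exists_smooth_approx {N : ℕ} {Ω : Set (Euc N)} (hΩo : IsOpen Ω) {φ : Euc N → ℝ}
    (hφ : ContDiff ℝ 1 φ) (hcs : HasCompactSupport φ) (hsub : tsupport φ ⊆ Ω) :
    ∃ K, IsCompact K ∧ K ⊆ Ω ∧ tsupport φ ⊆ K ∧ ∀ ε > 0, ∃ ψ : Euc N → ℝ,
      ContDiff ℝ (⊤ : ℕ∞) ψ ∧ tsupport ψ ⊆ K ∧ (∀ x, ‖ψ x - φ x‖ ≤ ε) ∧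
      ∀ x, ‖fderiv ℝ ψ x - fderiv ℝ φ x‖ ≤ ε := by
  obtain ⟨d, hd, hdΩ⟩ := hcs.isCompact.exists_cthickening_subset_open hΩo hsub
  refine ⟨Metric.cthickening d (tsupport φ), hcs.isCompact.cthickening, hdΩ,
    Metric.self_subset_cthickening _, fun ε hε => ?_⟩
  have hφ' : Continuous (fderiv ℝ φ) := hφ.continuous_fderiv one_ne_zero
  obtain ⟨η₁, hη₁, h₁⟩ := Metric.uniformContinuous_iff.mp
    (hcs.uniformContinuous_of_continuous hφ.continuous) ε hε
  obtain ⟨η₂, hη₂, h₂⟩ := Metric.uniformContinuous_iff.mp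
    ((hcs.fderiv ℝ).uniformContinuous_of_continuous hφ') ε hε
  set r := min (min η₁ η₂) d with hr
  have hrpos : 0 < r := by positivity
  let B : ContDiffBump (0 : Euc N) := ⟨r / 2, r, by positivity, by linarith⟩
  set ρ := B.normed volume with hρ
  have hloc : LocallyIntegrable φ volume := hφ.continuous.locallyIntegrable
  refine ⟨convolution ρ φ (ContinuousLinearMap.lsmul ℝ ℝ) volume, ?_, ?_, fun x => ?_, fun x => ?_⟩
  · exact B.hasCompactSupport_normed.contDiff_convolution_left _ B.contDiff_normed hloc
  · refine closure_minimal ?_ Metric.isClosed_cthickening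
    refine (support_convolution_subset _).trans ?_
    rintro _ ⟨a, ha, b, hb, rfl⟩
    rw [hρ, B.support_normed_eq] at ha
    refine Metric.mem_cthickening_of_dist_le _ b d _ (subset_tsupport φ hb) ?_
    have : dist a 0 < r := ha
    rw [dist_zero_right] at this
    simp only [dist_eq_norm, add_sub_cancel_right]
    exact this.le.trans (min_le_right _ _)
  · rw [← dist_eq_norm]
    refine ContDiffBump.dist_normed_convolution_le hφ.continuous.aestronglyMeasurable
      fun y hy => (h₁ (lt_of_lt_of_le hy ?_)).le
    exact (min_le_left _ _).trans (min_le_left _ _)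
  · have hρi : LocallyIntegrable ρ volume :=
      Continuous.locallyIntegrable (B.continuous_normed (μ := volume))
    have h3 := (hcs.hasFDerivAt_convolution_right (ContinuousLinearMap.lsmul ℝ ℝ)
      hρi hφ x).fderiv
    have h4 : convolution ρ (fderiv ℝ φ)
        ((ContinuousLinearMap.lsmul ℝ ℝ : ℝ →L[ℝ] ℝ →L[ℝ] ℝ).precompR (Euc N)) volume x
        = convolution ρ (fderiv ℝ φ) (ContinuousLinearMap.lsmul ℝ ℝ) volume x := by
      simp only [convolution_def]
      refine integral_congr_ae (Eventually.of_forall fun t => ?_)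
      ext v
      simp [ContinuousLinearMap.precompR_apply]
    rw [h3, h4, ← dist_eq_norm]
    refine ContDiffBump.dist_normed_convolution_le hφ'.aestronglyMeasurable
      fun y hy => (h₂ (lt_of_lt_of_le hy ?_)).le
    exact (min_le_left _ _).trans (min_le_right _ _)

lemma tendsto_of_norm_sub_le {E : Type*} [NormedAddCommGroup E] {f : ℕ → E} {a : E}
    (h : ∀ n, ‖f n - a‖ ≤ 1 / ((n : ℝ) + 1)) : Tendsto f atTop (𝓝 a) := by
  rw [tendsto_iff_norm_sub_tendsto_zero]
  exact squeeze_zero (fun _ => norm_nonneg _) h tendsto_one_div_add_atTop_nhds_zero_nat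

/-- Hardy's inequality extends from smooth to `C¹` test functions by mollification. -/
lemma hardy_C1 {N : ℕ} {Ω : Set (Euc N)} (hΩo : IsOpen Ω) (hc : Ωᶜ.Nonempty) {φ : Euc N → ℝ}
    (hφ : ContDiff ℝ 1 φ) (hcs : HasCompactSupport φ) (hsub : tsupport φ ⊆ Ω) :
    hardyConst Ω * ∫ x in Ω, (φ x) ^ 2 / (bdist Ω x) ^ 2 ≤ ∫ x in Ω, ‖fderiv ℝ φ x‖ ^ 2 := by
  obtain ⟨K, hK, hKΩ, hφK, happ⟩ := exists_smooth_approx hΩo hφ hcs hsub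
  choose ψ hψ hψK hψ0 hψ1 using fun n : ℕ => happ (1 / ((n : ℝ) + 1)) (by positivity)
  obtain ⟨c, hcpos, hcK⟩ := exists_le_bdist_of_isCompact hΩo hc hK hKΩ
  have hφ' : Continuous (fderiv ℝ φ) := hφ.continuous_fderiv one_ne_zero
  obtain ⟨A, hA⟩ := hcs.exists_bound_of_continuous hφ.continuous
  obtain ⟨A', hA'⟩ := (hcs.fderiv ℝ).exists_bound_of_continuous hφ'
  have hle1 : ∀ n : ℕ, 1 / ((n : ℝ) + 1) ≤ 1 := fun n => by
    rw [div_le_one (by positivity)]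
    linarith [(Nat.cast_nonneg n : (0 : ℝ) ≤ n)]
  have hbd : ∀ n x, ‖ψ n x‖ ≤ A + 1 := fun n x => by
    have h1 := norm_le_norm_add_norm_sub' (ψ n x) (φ x)
    linarith [hA x, hψ0 n x, hle1 n]
  have hbd' : ∀ n x, ‖fderiv ℝ (ψ n) x‖ ≤ A' + 1 := fun n x => by
    have h1 := norm_le_norm_add_norm_sub' (fderiv ℝ (ψ n) x) (fderiv ℝ φ x)
    linarith [hA' x, hψ1 n x, hle1 n]
  have hinter : ∀ a : ℝ, Integrable (K.indicator fun _ : Euc N => a) (volume.restrict Ω) := fun a =>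
    ((integrable_indicator_iff hK.measurableSet).mpr
      (integrableOn_const hK.measure_lt_top.ne)).restrict
  have hδm : Measurable (bdist Ω) := (continuous_bdist Ω).measurable
  have hlim : Tendsto (fun n => ∫ x in Ω, (ψ n x) ^ 2 / (bdist Ω x) ^ 2) atTop
      (𝓝 (∫ x in Ω, (φ x) ^ 2 / (bdist Ω x) ^ 2)) := by
    refine tendsto_integral_of_dominated_convergence (K.indicator fun _ => (A + 1) ^ 2 / c ^ 2)
      (fun n => ?_) (hinter _) (fun n => Eventually.of_forall fun x => ?_)
      (Eventually.of_forall fun x => ?_)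
    · exact (((hψ n).continuous.measurable.pow_const 2).div
        (hδm.pow_const 2)).aestronglyMeasurable
    · by_cases hx : x ∈ K
      · rw [Set.indicator_of_mem hx, norm_div, norm_pow, norm_pow]
        have h1 : c ≤ ‖bdist Ω x‖ := (hcK x hx).trans (le_abs_self _)
        have h2 := hbd n x
        gcongr
      · rw [Set.indicator_of_notMem hx, image_eq_zero_of_notMem_tsupport fun h => hx (hψK n h)]
        simp
    · exact ((tendsto_of_norm_sub_le fun n => hψ0 n x).pow 2).div_const _
  have hlim' : Tendsto (fun n => ∫ x in Ω, ‖fderiv ℝ (ψ n) x‖ ^ 2) atTop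
      (𝓝 (∫ x in Ω, ‖fderiv ℝ φ x‖ ^ 2)) := by
    refine tendsto_integral_of_dominated_convergence (K.indicator fun _ => (A' + 1) ^ 2)
      (fun n => ?_) (hinter _) (fun n => Eventually.of_forall fun x => ?_)
      (Eventually.of_forall fun x => ?_)
    · exact (((hψ n).continuous_fderiv (by norm_num)).norm.pow 2).aestronglyMeasurable
    · by_cases hx : x ∈ K
      · rw [Set.indicator_of_mem hx, norm_pow, norm_norm]
        have h2 := hbd' n x
        gcongr
      · rw [Set.indicator_of_notMem hx, image_eq_zero_of_notMem_tsupport fun h =>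
          hx (hψK n (tsupport_fderiv_subset ℝ h))]
        simp
    · exact (tendsto_of_norm_sub_le fun n => hψ1 n x).norm.pow 2
  refine le_of_tendsto_of_tendsto' (hlim.const_mul _) hlim' fun n => ?_
  have h := hardy_smooth (hψ n) (hK.of_isClosed_subset (isClosed_tsupport _) (hψK n))
    ((hψK n).trans hKΩ)
  simpa only [norm_gradient] using h

/-! ### Powers of the positive part -/

/-- The power `(t⁺)^q` of the positive part. For `q > 1` it is `C¹` on the whole line. -/
def posPow (q t : ℝ) : ℝ := (max t 0) ^ q

lemma posPow_of_nonpos {q t : ℝ} (hq : 0 < q) (ht : t ≤ 0) : posPow q t = 0 := by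
  rw [posPow, max_eq_right ht, Real.zero_rpow hq.ne']

lemma posPow_of_nonneg {q t : ℝ} (ht : 0 ≤ t) : posPow q t = t ^ q := by
  rw [posPow, max_eq_left ht]

lemma posPow_nonneg (q t : ℝ) : 0 ≤ posPow q t := Real.rpow_nonneg (le_max_right _ _) _

lemma continuous_posPow {q : ℝ} (hq : 0 ≤ q) : Continuous (posPow q) :=
  (continuous_id.max continuous_const).rpow_const fun _ => Or.inr hq

lemma posPow_sq (q t : ℝ) : posPow q t ^ 2 = posPow (2 * q) t := by
  rw [posPow, posPow, mul_comm, Real.rpow_mul (le_max_right _ _), Real.rpow_two]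

lemma posPow_mul_self {q t : ℝ} (hq : 0 < q) : posPow q t * t = posPow (q + 1) t := by
  rcases le_or_gt t 0 with h | h
  · rw [posPow_of_nonpos hq h, posPow_of_nonpos (by linarith) h, zero_mul]
  · rw [posPow_of_nonneg h.le, posPow_of_nonneg h.le, Real.rpow_add h, Real.rpow_one]

lemma posPow_le_one_add {q q' t : ℝ} (hq : 0 ≤ q) (hqq' : q ≤ q') :
    posPow q t ≤ 1 + posPow q' t := by
  have h0 := posPow_nonneg q' t
  rcases le_total (max t 0) 1 with h | h
  · have : posPow q t ≤ 1 := Real.rpow_le_one (le_max_right _ _) h hq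
    linarith
  · have : posPow q t ≤ posPow q' t := Real.rpow_le_rpow_of_exponent_le h hqq'
    linarith

lemma hasDerivAt_posPow {q : ℝ} (hq : 1 < q) (t : ℝ) :
    HasDerivAt (posPow q) (q * posPow (q - 1) t) t := by
  rcases lt_trichotomy t 0 with h | rfl | h
  · rw [posPow_of_nonpos (by linarith) h.le, mul_zero]
    refine (hasDerivAt_const t (0 : ℝ)).congr_of_eventuallyEq ?_
    filter_upwards [gt_mem_nhds h] with s hs
    exact posPow_of_nonpos (by linarith) (le_of_lt hs)
  · rw [posPow_of_nonpos (by linarith) le_rfl, mul_zero, hasDerivAt_iff_tendsto_slope_zero]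
    have hlim : Tendsto (posPow (q - 1)) (𝓝[≠] 0) (𝓝 0) := by
      have := (continuous_posPow (q := q - 1) (by linarith)).tendsto 0
      rw [posPow_of_nonpos (by linarith) le_rfl] at this
      exact this.mono_left nhdsWithin_le_nhds
    refine squeeze_zero_norm' ?_ hlim
    filter_upwards [self_mem_nhdsWithin] with s hs
    rw [zero_add, posPow_of_nonpos (q := q) (by linarith) le_rfl, sub_zero]
    rcases le_or_gt s 0 with h | h
    · rw [posPow_of_nonpos (q := q) (by linarith) h]
      simpa using posPow_nonneg (q - 1) s
    · have : posPow q s = posPow (q - 1) s * s := by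
        rw [posPow_mul_self (by linarith)]; ring_nf
      rw [this, smul_eq_mul, mul_comm (posPow (q - 1) s), inv_mul_cancel_left₀ h.ne',
        Real.norm_of_nonneg (posPow_nonneg _ _)]
  · rw [posPow_of_nonneg h.le]
    refine (Real.hasDerivAt_rpow_const (Or.inl h.ne')).congr_of_eventuallyEq ?_
    filter_upwards [lt_mem_nhds h] with s hs
    exact posPow_of_nonneg (le_of_lt hs)

lemma contDiff_posPow {q : ℝ} (hq : 1 < q) : ContDiff ℝ 1 (posPow q) := by
  rw [contDiff_one_iff_deriv]
  refine ⟨fun t => (hasDerivAt_posPow hq t).differentiableAt, ?_⟩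
  have : deriv (posPow q) = fun t => q * posPow (q - 1) t :=
    funext fun t => (hasDerivAt_posPow hq t).deriv
  rw [this]
  exact continuous_const.mul (continuous_posPow (by linarith))

/-! ### The energy estimate -/

lemma integrable_div_bdist_sq {N : ℕ} {Ω : Set (Euc N)} (hΩo : IsOpen Ω) (hc : Ωᶜ.Nonempty)
    {f : Euc N → ℝ} (hf : Continuous f) (hcs : HasCompactSupport f) (hsub : tsupport f ⊆ Ω) :
    Integrable (fun x => f x / bdist Ω x ^ 2) := by
  obtain ⟨c, hcpos, hcK⟩ := exists_le_bdist_of_isCompact hΩo hc hcs.isCompact hsub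
  have hi : Integrable f := hf.integrable_of_hasCompactSupport hcs
  refine Integrable.mono' (hi.norm.mul_const (1 / c ^ 2))
    (hf.measurable.div ((continuous_bdist Ω).measurable.pow_const 2)).aestronglyMeasurable
    (Eventually.of_forall fun x => ?_)
  by_cases hx : x ∈ tsupport f
  · rw [norm_div, norm_pow, mul_one_div]
    have h1 : c ≤ ‖bdist Ω x‖ := (hcK x hx).trans (le_abs_self _)
    gcongr
  · rw [image_eq_zero_of_notMem_tsupport hx]
    simp

/-- Green's formula `∫ |∇ (w⁺)^p|² = p² / (2p - 1) ∫ (-Δw) (w⁺)^(2p-1)`. -/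
lemma integral_norm_fderiv_posPow {N : ℕ} {w : Euc N → ℝ} (hw : ContDiff ℝ 2 w)
    (hcs : HasCompactSupport w) {p : ℝ} (hp : 1 < p) :
    ∫ x, ‖fderiv ℝ (fun y => posPow p (w y)) x‖ ^ 2
      = p ^ 2 / (2 * p - 1) * ∫ x, -lap w x * posPow (2 * p - 1) (w x) := by
  have hq : 1 < 2 * p - 1 := by linarith
  have hwd : Differentiable ℝ w := hw.differentiable (by norm_num)
  have hw1 : ContDiff ℝ 1 w := hw.of_le (by norm_num)
  set H : Euc N → ℝ := fun y => posPow (2 * p - 1) (w y) with hH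
  have hHC : ContDiff ℝ 1 H := (contDiff_posPow hq).comp hw1
  have hHcs : HasCompactSupport H :=
    hcs.comp_left (g := posPow (2 * p - 1)) (posPow_of_nonpos (by linarith) le_rfl)
  have hHd : ∀ x v, fderiv ℝ H x v
      = (2 * p - 1) * posPow (2 * p - 2) (w x) * fderiv ℝ w x v := by
    intro x v
    have h := ((hasDerivAt_posPow hq (w x)).comp_hasFDerivAt x (hwd x).hasFDerivAt).fderiv
    change fderiv ℝ H x = _ at h
    rw [h, show 2 * p - 1 - 1 = 2 * p - 2 by ring]
    simp
  have hnorm : ∀ x, ‖fderiv ℝ (fun y => posPow p (w y)) x‖ ^ 2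
      = p ^ 2 * ∑ i : Fin N, posPow (2 * p - 2) (w x)
        * (fderiv ℝ w x (EuclideanSpace.single i 1)) ^ 2 := by
    intro x
    have h := ((hasDerivAt_posPow hp (w x)).comp_hasFDerivAt x (hwd x).hasFDerivAt).fderiv
    change fderiv ℝ (fun y => posPow p (w y)) x = _ at h
    rw [h, norm_smul, mul_pow, norm_fderiv_sq w x, Real.norm_eq_abs, sq_abs, mul_pow, posPow_sq,
      show 2 * (p - 1) = 2 * p - 2 by ring, ← Finset.mul_sum, mul_assoc]
  have hgC : ∀ i : Fin N, ContDiff ℝ 1 (fun y => fderiv ℝ w y (EuclideanSpace.single i 1)) :=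
    fun i => (hw.fderiv_right (m := 1) (by norm_num)).clm_apply contDiff_const
  have hgcs : ∀ i : Fin N, HasCompactSupport
      (fun y => fderiv ℝ w y (EuclideanSpace.single i 1)) := fun i => hcs.fderiv_apply ℝ _
  have hggc : ∀ i : Fin N, Continuous fun x =>
      fderiv ℝ (fun y => fderiv ℝ w y (EuclideanSpace.single i 1)) x
        (EuclideanSpace.single i 1) := fun i =>
    ((hgC i).continuous_fderiv one_ne_zero).clm_apply continuous_const
  have hi1 : ∀ i : Fin N, Integrable fun x => posPow (2 * p - 2) (w x)
      * (fderiv ℝ w x (EuclideanSpace.single i 1)) ^ 2 := by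
    intro i
    refine Continuous.integrable_of_hasCompactSupport ?_ ?_
    · exact ((continuous_posPow (by linarith)).comp hw.continuous).mul ((hgC i).continuous.pow 2)
    · refine HasCompactSupport.mul_right ?_
      exact hcs.comp_left (g := posPow (2 * p - 2)) (posPow_of_nonpos (by linarith) le_rfl)
  have hi2 : ∀ i : Fin N, Integrable fun x =>
      H x * fderiv ℝ (fun y => fderiv ℝ w y (EuclideanSpace.single i 1)) x
        (EuclideanSpace.single i 1) := fun i =>
    (hHC.continuous.mul (hggc i)).integrable_of_hasCompactSupport hHcs.mul_right
  have hparts : ∀ i : Fin N,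
      ∫ x, H x * fderiv ℝ (fun y => fderiv ℝ w y (EuclideanSpace.single i 1)) x
        (EuclideanSpace.single i 1)
      = -((2 * p - 1) * ∫ x, posPow (2 * p - 2) (w x)
        * (fderiv ℝ w x (EuclideanSpace.single i 1)) ^ 2) := by
    intro i
    have hE : (fun x => fderiv ℝ H x (EuclideanSpace.single i 1)
        * fderiv ℝ w x (EuclideanSpace.single i 1))
        = fun x => (2 * p - 1) * (posPow (2 * p - 2) (w x)
          * (fderiv ℝ w x (EuclideanSpace.single i 1)) ^ 2) := by
      funext x
      rw [hHd]; ring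
    rw [integral_mul_fderiv_eq_neg_fderiv_mul_of_integrable, hE, integral_const_mul]
    · rw [hE]; exact (hi1 i).const_mul _
    · exact hi2 i
    · exact (hHC.continuous.mul (hgC i).continuous).integrable_of_hasCompactSupport hHcs.mul_right
    · exact fun x _ => hHC.differentiable one_ne_zero x
    · exact fun x _ => (hgC i).differentiable one_ne_zero x
  have hlap : ∫ x, -lap w x * H x = (2 * p - 1) * ∑ i : Fin N, ∫ x, posPow (2 * p - 2) (w x)
        * (fderiv ℝ w x (EuclideanSpace.single i 1)) ^ 2 := by
    have h1 : (fun x => -lap w x * H x) = fun x => -∑ i : Fin N,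
        H x * fderiv ℝ (fun y => fderiv ℝ w y (EuclideanSpace.single i 1)) x
          (EuclideanSpace.single i 1) := by
      funext x
      rw [lap, ← Finset.mul_sum]; ring
    rw [h1, integral_neg, integral_finsetSum _ fun i _ => hi2 i,
      Finset.sum_congr rfl fun i _ => hparts i, Finset.sum_neg_distrib, neg_neg, Finset.mul_sum]
  rw [hlap, integral_congr_ae (Eventually.of_forall hnorm), integral_const_mul,
    integral_finsetSum _ fun i _ => hi1 i]
  have : 2 * p - 1 ≠ 0 := by linarith
  rw [← mul_assoc, div_mul_cancel₀ _ this]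

/-- Hardy's inequality for `(w⁺)^p`, where `w` satisfies `-Δw ≤ μ w / δ² + ε` on `{w > 0}`. -/
lemma energy_estimate {N : ℕ} {Ω : Set (Euc N)} (hΩo : IsOpen Ω) (hc : Ωᶜ.Nonempty)
    {w : Euc N → ℝ} (hw : ContDiff ℝ 2 w) (hcs : HasCompactSupport w) (hsub : tsupport w ⊆ Ω)
    {p μ ε : ℝ} (hp : 1 < p)
    (heq : ∀ x ∈ Ω, 0 < w x → -lap w x ≤ μ / bdist Ω x ^ 2 * w x + ε) :
    hardyConst Ω * ∫ x in Ω, posPow (2 * p) (w x) / bdist Ω x ^ 2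
      ≤ p ^ 2 / (2 * p - 1) * (μ * (∫ x in Ω, posPow (2 * p) (w x) / bdist Ω x ^ 2)
        + ε * ∫ x in Ω, posPow (2 * p - 1) (w x)) := by
  have hq : 0 < 2 * p - 1 := by linarith
  have hw1 : ContDiff ℝ 1 w := hw.of_le (by norm_num)
  have hzero : ∀ q : ℝ, 0 < q → posPow q 0 = 0 := fun q hq => posPow_of_nonpos hq le_rfl
  have hts : ∀ q : ℝ, 0 < q → tsupport (fun y => posPow q (w y)) ⊆ Ω := fun q hq =>
    (closure_mono (Function.support_comp_subset (hzero q hq) w)).trans hsub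
  have hcs' : ∀ q : ℝ, 0 < q → HasCompactSupport (fun y => posPow q (w y)) := fun q hq =>
    hcs.comp_left (g := posPow q) (hzero q hq)
  have hcont : ∀ q : ℝ, 0 < q → Continuous (fun y => posPow q (w y)) := fun q hq =>
    (continuous_posPow hq.le).comp hw.continuous
  have hhardy := hardy_C1 hΩo hc (φ := fun y => posPow p (w y)) ((contDiff_posPow hp).comp hw1)
    (hcs' p (by linarith)) (hts p (by linarith))
  simp only [posPow_sq] at hhardy
  refine hhardy.trans ?_
  have hφi : Integrable fun x => ‖fderiv ℝ (fun y => posPow p (w y)) x‖ ^ 2 := by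
    have hC : ContDiff ℝ 1 (fun y => posPow p (w y)) := (contDiff_posPow hp).comp hw1
    refine Continuous.integrable_of_hasCompactSupport
      ((hC.continuous_fderiv one_ne_zero).norm.pow 2) ?_
    exact ((hcs' p (by linarith)).fderiv ℝ).comp_left (g := fun L => ‖L‖ ^ 2) (by simp)
  have h1 : ∫ x in Ω, ‖fderiv ℝ (fun y => posPow p (w y)) x‖ ^ 2
      ≤ ∫ x, ‖fderiv ℝ (fun y => posPow p (w y)) x‖ ^ 2 :=
    setIntegral_le_integral hφi (Eventually.of_forall fun x => by positivity)
  refine h1.trans ?_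
  rw [integral_norm_fderiv_posPow hw hcs hp]
  refine mul_le_mul_of_nonneg_left ?_ (by positivity)
  have hout : ∀ x, x ∉ Ω → -lap w x * posPow (2 * p - 1) (w x) = 0 := by
    intro x hx
    rw [image_eq_zero_of_notMem_tsupport (f := w) fun h => hx (hsub h), hzero _ hq, mul_zero]
  rw [← setIntegral_eq_integral_of_forall_compl_eq_zero hout, ← integral_const_mul,
    ← integral_const_mul]
  have hiA : Integrable fun x => posPow (2 * p) (w x) / bdist Ω x ^ 2 :=
    integrable_div_bdist_sq hΩo hc (hcont _ (by linarith)) (hcs' _ (by linarith))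
      (hts _ (by linarith))
  have hiB : Integrable fun x => posPow (2 * p - 1) (w x) :=
    (hcont _ hq).integrable_of_hasCompactSupport (hcs' _ hq)
  rw [← integral_add (hiA.const_mul μ).integrableOn (hiB.const_mul ε).integrableOn]
  have hlapc : Continuous (lap w) := by
    refine continuous_finsetSum _ fun i _ => ?_
    have hgC : ContDiff ℝ 1 (fun y => fderiv ℝ w y (EuclideanSpace.single i 1)) :=
      (hw.fderiv_right (m := 1) (by norm_num)).clm_apply contDiff_const
    exact (hgC.continuous_fderiv one_ne_zero).clm_apply continuous_const
  have hiL : Integrable fun x => -lap w x * posPow (2 * p - 1) (w x) :=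
    (hlapc.neg.mul (hcont _ hq)).integrable_of_hasCompactSupport (hcs' _ hq).mul_left
  refine setIntegral_mono_on hiL.integrableOn
    ((hiA.const_mul μ).add (hiB.const_mul ε)).integrableOn hΩo.measurableSet fun x hx => ?_
  rcases le_or_gt (w x) 0 with h | h
  · rw [posPow_of_nonpos hq h, posPow_of_nonpos (by linarith) h]
    simp
  · have h2 := mul_le_mul_of_nonneg_right (heq x hx h) (posPow_nonneg (2 * p - 1) (w x))
    have h3 : posPow (2 * p) (w x) = posPow (2 * p - 1) (w x) * w x := by
      rw [posPow_mul_self hq]; ring_nf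
    refine h2.trans (le_of_eq ?_)
    rw [h3]
    ring

/-! ### Uniqueness -/

/-- The nonlinear part of the comparison: where `U₁ ≥ (1 + ε) U₂`, the exponential terms in the equation
for `U₁ - (1 + ε) U₂` contribute at most `ε`. -/
lemma exp_defect {ε s t : ℝ} (hε : 0 < ε) (h : (1 + ε) * t ≤ s) :
    (1 + ε) * Real.exp t - Real.exp s ≤ ε := by
  have h1 : Real.exp t * (1 + ε * t) ≤ Real.exp s := by
    calc Real.exp t * (1 + ε * t) ≤ Real.exp t * Real.exp (ε * t) := by
          gcongr
          linarith [Real.add_one_le_exp (ε * t)]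
      _ = Real.exp ((1 + ε) * t) := by rw [← Real.exp_add]; ring_nf
      _ ≤ Real.exp s := Real.exp_le_exp.mpr h
  have h2 : Real.exp t * (1 - t) ≤ 1 := by
    calc Real.exp t * (1 - t) ≤ Real.exp t * Real.exp (-t) := by
          gcongr
          linarith [Real.add_one_le_exp (-t)]
      _ = 1 := by rw [← Real.exp_add]; simp
  nlinarith

/-- The function `U₁ - (1 + ε) U₂` is positive only away from the boundary, so a cutoff near the boundary
turns it into a compactly supported `C²` function `w` on the whole space with the same positive part. -/
lemma exists_cutoff {N : ℕ} {Ω : Set (Euc N)} (hΩo : IsOpen Ω) (hc : Ωᶜ.Nonempty)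
    (hΩb : Bornology.IsBounded Ω) {μ : ℝ} (hμ : 0 < μ) {U₁ U₂ : Euc N → ℝ}
    (h₁ : IsSolution μ Ω U₁) (h₂ : IsSolution μ Ω U₂) (h₂' : IsLarge Ω U₂) {ε : ℝ} (hε : 0 < ε) :
    ∃ w : Euc N → ℝ, ContDiff ℝ 2 w ∧ HasCompactSupport w ∧ tsupport w ⊆ Ω ∧
      (∀ x ∈ Ω, 0 < w x → -lap w x ≤ μ / bdist Ω x ^ 2 * w x + ε) ∧
      ∀ x ∈ Ω, 0 < U₁ x - (1 + ε) * U₂ x → w x = U₁ x - (1 + ε) * U₂ x := by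
  obtain ⟨r, hr, hur⟩ := large_solution_ratio hΩo hc hΩb hμ h₁ h₂ h₂' hε
  set v : Euc N → ℝ := fun x => U₁ x + (-(1 + ε)) * U₂ x with hv
  have hcl : ∀ c : ℝ, IsClosed {x | c ≤ bdist Ω x} := fun c =>
    isClosed_le continuous_const (continuous_bdist Ω)
  have hinter : {x | r ≤ bdist Ω x} ⊆ interior {x | r / 2 ≤ bdist Ω x} := by
    have ho : IsOpen {x | r / 2 < bdist Ω x} := isOpen_lt continuous_const (continuous_bdist Ω)
    have hsub : {x | r / 2 < bdist Ω x} ⊆ {x | r / 2 ≤ bdist Ω x} :=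
      fun x hx => le_of_lt (show r / 2 < bdist Ω x from hx)
    exact fun x hx => interior_maximal hsub ho
      (show r / 2 < bdist Ω x from lt_of_lt_of_le (by linarith) hx)
  obtain ⟨χ, hχ1, hχ0, hχ⟩ := exists_contMDiffMap_one_nhds_of_subset_interior
    (n := 2) (modelWithCornersSelf ℝ (Euc N)) (hcl r) hinter
  have hχC : ContDiff ℝ 2 χ := χ.contMDiff.contDiff
  have hχts : tsupport χ ⊆ {x | r / 2 ≤ bdist Ω x} := by
    refine closure_minimal (fun x hx => ?_) (hcl _)
    by_contra h
    exact hx (hχ0 x h)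
  have htΩ : {x | r / 2 ≤ bdist Ω x} ⊆ Ω := fun x hx =>
    mem_of_bdist_pos (lt_of_lt_of_le (by positivity) hx)
  have hvC : ∀ x ∈ Ω, ContDiffAt ℝ 2 v x := fun x hx =>
    (h₁.1.contDiffAt (hΩo.mem_nhds hx)).add
      (contDiffAt_const.mul (h₂.1.contDiffAt (hΩo.mem_nhds hx)))
  have hwts : tsupport (fun x => χ x * v x) ⊆ tsupport χ := tsupport_mul_subset_left
  have hvr : ∀ x ∈ Ω, 0 < v x → r ≤ bdist Ω x := by
    intro x hx hpos
    by_contra! h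
    have := hur x hx h
    simp only [hv] at hpos
    linarith
  have hχx : ∀ x ∈ Ω, 0 < v x → ∀ᶠ y in 𝓝 x, χ y = 1 := by
    intro x hx hpos
    have hm : x ∈ {x | r ≤ bdist Ω x} := hvr x hx hpos
    exact hχ1.filter_mono (nhds_le_nhdsSet hm)
  refine ⟨fun x => χ x * v x, ?_, ?_, (hwts.trans hχts).trans htΩ, fun x hx hpos => ?_,
    fun x hx hpos => ?_⟩
  · refine contDiff_iff_contDiffAt.mpr fun x => ?_
    by_cases hx : x ∈ tsupport fun x => χ x * v x
    · exact hχC.contDiffAt.mul (hvC x (htΩ (hχts (hwts hx))))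
    · exact contDiffAt_const.congr_of_eventuallyEq (notMem_tsupport_iff_eventuallyEq.mp hx)
  · exact (isCompact_bdist_ge hΩb (by positivity)).of_isClosed_subset (isClosed_tsupport _)
      (hwts.trans hχts)
  · have hvpos : 0 < v x := pos_of_mul_pos_right hpos (hχ x).1
    have hev : (fun y => χ y * v y) =ᶠ[𝓝 x] v := by
      filter_upwards [hχx x hx hvpos] with y hy
      rw [hy, one_mul]
    change -lap (fun y => χ y * v y) x ≤ μ / bdist Ω x ^ 2 * (χ x * v x) + ε
    rw [lap_congr hev, (hχx x hx hvpos).self_of_nhds, one_mul, lap_add_const_mul _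
      (h₁.1.contDiffAt (hΩo.mem_nhds hx)) (h₂.1.contDiffAt (hΩo.mem_nhds hx))]
    have e1 := h₁.2 x hx
    have e2 := h₂.2 x hx
    have e3 : lap U₁ x = Real.exp (U₁ x) - μ / bdist Ω x ^ 2 * U₁ x := by linarith
    have e4 : lap U₂ x = Real.exp (U₂ x) - μ / bdist Ω x ^ 2 * U₂ x := by linarith
    have hlt : (1 + ε) * U₂ x ≤ U₁ x := by
      simp only [hv] at hvpos
      linarith
    have e5 := exp_defect hε hlt
    rw [e3, e4]
    simp only [hv]
    linarith
  · have hvpos : 0 < v x := by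
      simp only [hv]; linarith
    simp only [(hχx x hx hvpos).self_of_nhds, hv]
    ring

/-- The energy estimate for the cut-off of `U₁ - (1 + ε) U₂` bounds `∫ ((U₁ - (1 + ε) U₂)⁺)^(2p) / δ²`
by a constant times `ε`; as `ε → 0` this excludes a ball on which `U₁ > U₂`. -/
lemma large_solution_le {N : ℕ} {Ω : Set (Euc N)} (hΩo : IsOpen Ω) (hc : Ωᶜ.Nonempty)
    (hΩb : Bornology.IsBounded Ω) {μ : ℝ} (hμ : 0 < μ) (hμH : μ < hardyConst Ω)
    {U₁ U₂ : Euc N → ℝ} (h₁ : IsSolution μ Ω U₁) (h₂ : IsSolution μ Ω U₂) (h₂' : IsLarge Ω U₂) :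
    ∀ x ∈ Ω, U₁ x ≤ U₂ x := by
  intro x₀ hx₀
  by_contra! hlt
  obtain ⟨D, hD, hDΩ⟩ := bdist_le_of_isBounded hΩb hc
  -- As `p² / (2p - 1) → 1` when `p → 1`, some `p > 1` has `μ p² / (2p - 1) < hardyConst Ω`.
  obtain ⟨p, hp, hpk⟩ : ∃ p : ℝ, 1 < p ∧ p ^ 2 / (2 * p - 1) * μ < hardyConst Ω := by
    have ht : 0 < (hardyConst Ω - μ) / (2 * μ) := div_pos (by linarith) (by linarith)
    set t := min 1 ((hardyConst Ω - μ) / (2 * μ)) with htdef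
    have ht0 : 0 < t := lt_min one_pos ht
    have ht1 : t ≤ 1 := min_le_left _ _
    have ht2 : t * (2 * μ) ≤ hardyConst Ω - μ := by
      rw [← le_div_iff₀ (by positivity)]; exact min_le_right _ _
    refine ⟨1 + t, by linarith, ?_⟩
    have h1 : (1 + t) ^ 2 / (2 * (1 + t) - 1) ≤ 1 + t := by
      rw [div_le_iff₀ (by linarith)]; nlinarith
    have h2 := mul_le_mul_of_nonneg_right h1 hμ.le
    nlinarith
  set k := p ^ 2 / (2 * p - 1) with hk
  have hkpos : 0 < k := div_pos (by positivity) (by linarith)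
  set g := hardyConst Ω - k * μ with hg
  have hgpos : 0 < g := by rw [hg]; linarith
  set V := volume.real Ω with hV
  have hΩfin : volume Ω < ⊤ := hΩb.measure_lt_top
  set a := U₁ x₀ - U₂ x₀ with ha
  have hapos : 0 < a := by rw [ha]; linarith
  -- A ball on which `U₁ - (1 + ε) U₂ ≥ a / 4` for all small `ε`.
  obtain ⟨ρ, hρ, hball⟩ : ∃ ρ > 0, ∀ y ∈ Metric.ball x₀ ρ,
      y ∈ Ω ∧ a / 2 < U₁ y - U₂ y ∧ |U₂ y| < |U₂ x₀| + 1 := by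
    have c1 : ContinuousAt U₁ x₀ := (h₁.1.contDiffAt (hΩo.mem_nhds hx₀)).continuousAt
    have c2 : ContinuousAt U₂ x₀ := (h₂.1.contDiffAt (hΩo.mem_nhds hx₀)).continuousAt
    have e1 : ∀ᶠ y in 𝓝 x₀, a / 2 < U₁ y - U₂ y :=
      (c1.sub c2).eventually (lt_mem_nhds (by change a / 2 < U₁ x₀ - U₂ x₀; linarith))
    have e2 : ∀ᶠ y in 𝓝 x₀, |U₂ y| < |U₂ x₀| + 1 :=
      c2.abs.eventually (gt_mem_nhds (by linarith))
    exact Metric.eventually_nhds_iff_ball.mp ((hΩo.eventually_mem hx₀).and (e1.and e2))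
  set M := |U₂ x₀| + 1 with hM
  have hMpos : 0 < M := by positivity
  set b := (a / 4) ^ (2 * p) / D ^ 2 * volume.real (Metric.ball x₀ ρ) with hb
  have hbpos : 0 < b := by
    have : 0 < volume.real (Metric.ball x₀ ρ) :=
      ENNReal.toReal_pos (Metric.measure_ball_pos volume x₀ hρ).ne' measure_ball_lt_top.ne
    positivity
  have key : ∀ ε > 0, ε * M ≤ a / 4 → k * D ^ 2 * ε ≤ g / 2 → b * (g / 2) ≤ k * V * ε := by
    intro ε hε hεM hεg
    obtain ⟨w, hwC, hwcs, hwsub, hweq, hwv⟩ := exists_cutoff hΩo hc hΩb hμ h₁ h₂ h₂' hε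
    have hen := energy_estimate hΩo hc hwC hwcs hwsub hp hweq
    set I := ∫ x in Ω, posPow (2 * p) (w x) / bdist Ω x ^ 2 with hI
    have hcs' : ∀ q : ℝ, 0 < q → HasCompactSupport (fun y => posPow q (w y)) := fun q hq =>
      hwcs.comp_left (g := posPow q) (posPow_of_nonpos hq le_rfl)
    have hcont : ∀ q : ℝ, 0 < q → Continuous (fun y => posPow q (w y)) := fun q hq =>
      (continuous_posPow hq.le).comp hwC.continuous
    have hiA : Integrable fun x => posPow (2 * p) (w x) / bdist Ω x ^ 2 :=
      integrable_div_bdist_sq hΩo hc (hcont _ (by linarith)) (hcs' _ (by linarith))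
        ((closure_mono (Function.support_comp_subset
          (posPow_of_nonpos (by linarith) le_rfl) w)).trans hwsub)
    have hiB : Integrable fun x => posPow (2 * p - 1) (w x) :=
      (hcont _ (by linarith)).integrable_of_hasCompactSupport (hcs' _ (by linarith))
    have hlow : ∫ x in Ω, posPow (2 * p - 1) (w x) ≤ V + D ^ 2 * I := by
      have hone : IntegrableOn (fun _ : Euc N => (1 : ℝ)) Ω := integrableOn_const hΩfin.ne
      have h1 : ∫ x in Ω, (1 + D ^ 2 * (posPow (2 * p) (w x) / bdist Ω x ^ 2)) = V + D ^ 2 * I := by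
        rw [integral_add hone (hiA.const_mul _).integrableOn, integral_const_mul]
        simp [hV, hI, Measure.real]
      rw [← h1]
      refine setIntegral_mono_on hiB.integrableOn
        (hone.add (hiA.const_mul _).integrableOn) hΩo.measurableSet fun x hx => ?_
      refine (posPow_le_one_add (q' := 2 * p) (by linarith) (by linarith)).trans ?_
      have hδ := bdist_pos hΩo hc hx
      have h2 : bdist Ω x ^ 2 ≤ D ^ 2 := pow_le_pow_left₀ hδ.le (hDΩ x hx) 2
      have h3 : posPow (2 * p) (w x) ≤ D ^ 2 * (posPow (2 * p) (w x) / bdist Ω x ^ 2) := by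
        rw [← mul_div_assoc, le_div_iff₀ (by positivity), mul_comm]
        exact mul_le_mul_of_nonneg_right h2 (posPow_nonneg _ _)
      linarith
    have hIb : b ≤ I := by
      have h1 : ∫ x in Metric.ball x₀ ρ, (a / 4) ^ (2 * p) / D ^ 2 = b := by
        rw [setIntegral_const, smul_eq_mul, mul_comm]
      have h2 : ∫ x in Metric.ball x₀ ρ, posPow (2 * p) (w x) / bdist Ω x ^ 2 ≤ I :=
        setIntegral_mono_set hiA.integrableOn
          (Eventually.of_forall fun x => div_nonneg (posPow_nonneg _ _) (sq_nonneg _))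
          (LE.le.eventuallyLE fun y hy => (hball y hy).1)
      refine le_trans ?_ h2
      rw [← h1]
      refine setIntegral_mono_on (integrableOn_const measure_ball_lt_top.ne) hiA.integrableOn
        measurableSet_ball fun y hy => ?_
      obtain ⟨hyΩ, hy1, hy2⟩ := hball y hy
      have hδ := bdist_pos hΩo hc hyΩ
      have hεU : ε * U₂ y ≤ a / 4 := by
        refine le_trans ?_ hεM
        exact mul_le_mul_of_nonneg_left ((le_abs_self _).trans hy2.le) hε.le
      have hv : a / 4 ≤ U₁ y - (1 + ε) * U₂ y := by linarith
      have hw : a / 4 ≤ w y := by rw [hwv y hyΩ (by linarith)]; exact hv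
      rw [posPow_of_nonneg (by linarith)]
      have hδD := hDΩ y hyΩ
      gcongr
      exact Real.rpow_nonneg (by linarith) _
    have hI0 : 0 ≤ I := hbpos.le.trans hIb
    have h1 : g * I ≤ k * ε * (V + D ^ 2 * I) := by
      have h2 := mul_le_mul_of_nonneg_left hlow (by positivity : 0 ≤ k * ε)
      rw [hg]
      linarith
    have h2 := mul_le_mul_of_nonneg_right hεg hI0
    have h3 := mul_le_mul_of_nonneg_right hIb (by linarith : 0 ≤ g / 2)
    linarith
  have hlim : ∀ c d : ℝ, 0 < d → ∀ᶠ ε in 𝓝[>] (0 : ℝ), c * ε < d := by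
    intro c d hd
    have : Tendsto (fun ε : ℝ => c * ε) (𝓝 0) (𝓝 (c * 0)) := tendsto_id.const_mul c
    rw [mul_zero] at this
    exact (this.mono_left nhdsWithin_le_nhds).eventually (gt_mem_nhds hd)
  obtain ⟨ε, ⟨⟨e1, e2⟩, e3⟩, hε⟩ := (((hlim M (a / 4) (by positivity)).and
    (hlim (k * D ^ 2) (g / 2) (by positivity))).and
    (hlim (k * V) (b * (g / 2)) (by positivity))).and self_mem_nhdsWithin |>.exists
  have := key ε hε (by linarith) e2.le
  linarith


theorem uniqueness_of_large_solution {N : ℕ} (hN : 2 ≤ N)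
    (Ω : Set (Euc N)) (hΩo : IsOpen Ω) (hΩne : Ω.Nonempty)
    (hΩb : Bornology.IsBounded Ω) (hΩreg : BoundaryC3 Ω)
    {μ : ℝ} (hμ0 : 0 < μ) (hμH : μ < hardyConst Ω)
    (U₁ U₂ : Euc N → ℝ)
    (h₁ : IsSolution μ Ω U₁) (h₁' : IsLarge Ω U₁)
    (h₂ : IsSolution μ Ω U₂) (h₂' : IsLarge Ω U₂) :
    Set.EqOn U₁ U₂ Ω := by
  have hc := compl_nonempty_of_isBounded hN hΩb
  intro x hx
  exact le_antisymm (large_solution_le hΩo hc hΩb hμ0 hμH h₁ h₂ h₂' x hx)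
    (large_solution_le hΩo hc hΩb hμ0 hμH h₂ h₁ h₁' x hx)
end
end

section
/- Let μ ≤ 0. Then there exists a constant A > 0, depending only on Ω, such that every classical solution u of (*) satisfies u(x) ≤ log(A / δ(x)²) for all x ∈ Ω. -/
/-!
The proof is the Keller–Osserman comparison on balls. Let `closedBall x₀ r ⊆ Ω` and put
`q(x) = r² - |x - x₀|²`. The barrier `w = log (c r² / q²)` blows up on the sphere and satisfies
`Δw = 4N/q + 8|x - x₀|²/q² ≤ 4N r²/q² ≤ exp w` as soon as `c ≥ 4N` and `N ≥ 2`. When moreover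
`c ≥ r²`, the barrier is nonnegative, so at a point where `u > w` we have `u > 0`; since `μ ≤ 0`,
the equation then gives `Δu ≥ exp u > exp w ≥ Δw`. This is impossible at a maximum of `u - w`, whence
`u(x₀) ≤ w(x₀) = log (c / r²)` (`exp_mul_sq_le_of_closedBall_subset`), and letting `r ↑ δ(x₀)`
gives the bound. The maximum of `u - w` is found as the maximum over the closed ball of the
continuous function `q² exp u`, and `Δu ≤ Δw` at that point is obtained one coordinate direction at
a time from the one-variable second derivative test. Since `Ω` is
bounded, `δ ≤ R` for some `R`, so `c = 4N + R²` serves for all these balls.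
-/

open MeasureTheory Real Filter Topology Set

noncomputable section

lemma second_deriv_nonpos_of_isLocalMax {g g' : ℝ → ℝ} {m : ℝ}
    (hg : ∀ᶠ t in 𝓝 (0 : ℝ), HasDerivAt g (g' t) t) (hg' : HasDerivAt g' m 0)
    (hmax : IsLocalMax g 0) : m ≤ 0 := by
  by_contra! hm
  have hd : deriv g =ᶠ[𝓝 0] g' := hg.mono fun t ht => ht.deriv
  have hdd : deriv (deriv g) 0 = m := by rw [hd.deriv_eq, hg'.deriv]
  have hmin : IsLocalMin g 0 :=
    isLocalMin_of_deriv_deriv_pos (by rw [hdd]; exact hm) hmax.deriv_eq_zero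
      hg.self_of_nhds.continuousAt
  -- A point that is both a local maximum and a local minimum has a neighbourhood on which `g`
  -- is constant, so the second derivative there vanishes.
  have hconst : g =ᶠ[𝓝 0] fun _ => g 0 := by
    filter_upwards [hmax, hmin] with t h1 h2 using le_antisymm h1 h2
  have h0 : deriv (deriv g) 0 = 0 := by
    rw [hconst.deriv.deriv_eq]; simp
  linarith

/-- If `u + 2 log (r² - |x - x₀|²)`, which is `u - w` up to a constant, has a local maximum at `z`,
then `∂ᵢᵢ u(z) ≤ ∂ᵢᵢ w(z)`. -/
lemma second_partial_le {N : ℕ} {Ω : Set (Euc N)} (hΩo : IsOpen Ω) {u : Euc N → ℝ}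
    (hu : ContDiffOn ℝ 2 u Ω) {x₀ z : Euc N} (hz : z ∈ Ω) {r : ℝ} (hq : 0 < r ^ 2 - ‖z - x₀‖ ^ 2)
    (hmax : IsLocalMax (fun x => u x + 2 * Real.log (r ^ 2 - ‖x - x₀‖ ^ 2)) z) (i : Fin N) :
    fderiv ℝ (fun y => fderiv ℝ u y (EuclideanSpace.single i 1)) z (EuclideanSpace.single i 1) ≤
      4 / (r ^ 2 - ‖z - x₀‖ ^ 2) + 8 * (z - x₀) i ^ 2 / (r ^ 2 - ‖z - x₀‖ ^ 2) ^ 2 := by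
  set e : Euc N := EuclideanSpace.single i 1 with he
  set q : ℝ := r ^ 2 - ‖z - x₀‖ ^ 2 with hqdef
  set a : ℝ := (z - x₀) i with ha
  set D : ℝ := fderiv ℝ (fun y => fderiv ℝ u y e) z e with hD
  have hline : ∀ t : ℝ, HasDerivAt (fun t : ℝ => z + t • e) e t := fun t => by
    simpa using ((hasDerivAt_id t).smul_const e).const_add z
  have hlc : Continuous fun t : ℝ => z + t • e := by fun_prop
  have hl0 : Tendsto (fun t : ℝ => z + t • e) (𝓝 0) (𝓝 z) := by
    simpa using hlc.tendsto 0
  have hnorm : ∀ t : ℝ, r ^ 2 - ‖z + t • e - x₀‖ ^ 2 = q - 2 * a * t - t ^ 2 := fun t => by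
    have h1 : z + t • e - x₀ = (z - x₀) + t • e := by abel
    rw [h1, norm_add_sq_real, norm_smul, inner_smul_right, he, EuclideanSpace.inner_single_right]
    simp [hqdef, ha]
    ring
  have hp : ∀ t : ℝ, HasDerivAt (fun t : ℝ => q - 2 * a * t - t ^ 2) (-2 * a - 2 * t) t :=
    fun t => by
      have h := (((hasDerivAt_id t).const_mul (2 * a)).const_sub q).sub (hasDerivAt_pow 2 t)
      exact h.congr_deriv (by simp)
  have hppos : ∀ᶠ t in 𝓝 (0 : ℝ), 0 < q - 2 * a * t - t ^ 2 := by
    have hc : ContinuousAt (fun t : ℝ => q - 2 * a * t - t ^ 2) 0 := (hp 0).continuousAt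
    exact hc.eventually (lt_mem_nhds (by simpa using hq))
  have hΩt : ∀ᶠ t in 𝓝 (0 : ℝ), z + t • e ∈ Ω := hl0.eventually (hΩo.mem_nhds hz)
  have hfd : ContDiffAt ℝ 1 (fun y => fderiv ℝ u y e) z :=
    ((hu.contDiffAt (hΩo.mem_nhds hz)).fderiv_right (m := 1) (by norm_num)).clm_apply
      contDiffAt_const
  have hm : D + 2 * (-(2 * q + (2 * a) ^ 2) / q ^ 2) ≤ 0 := by
    apply second_deriv_nonpos_of_isLocalMax
      (g := fun t => u (z + t • e) + 2 * Real.log (q - 2 * a * t - t ^ 2))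
      (g' := fun t => fderiv ℝ u (z + t • e) e +
        2 * ((-2 * a - 2 * t) / (q - 2 * a * t - t ^ 2)))
    · filter_upwards [hppos, hΩt] with t ht1 ht2
      have hdu : DifferentiableAt ℝ u (z + t • e) :=
        (hu.contDiffAt (hΩo.mem_nhds ht2)).differentiableAt (by norm_num)
      exact (hdu.hasFDerivAt.comp_hasDerivAt t (hline t)).add
        (((hp t).log ht1.ne').const_mul 2)
    · have hz0 : z + (0 : ℝ) • e = z := by simp
      have h1 : HasDerivAt (fun t : ℝ => fderiv ℝ u (z + t • e) e) D 0 := by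
        have hF : HasFDerivAt (fun y => fderiv ℝ u y e) (fderiv ℝ (fun y => fderiv ℝ u y e) z)
            (z + (0 : ℝ) • e) := by
          rw [hz0]; exact (hfd.differentiableAt (by norm_num)).hasFDerivAt
        exact hF.comp_hasDerivAt (0 : ℝ) (hline 0)
      have h2 : HasDerivAt (fun t : ℝ => -2 * a - 2 * t) (-2) 0 := by
        simpa using ((hasDerivAt_id (0 : ℝ)).const_mul 2).const_sub (-2 * a)
      have h3 := h2.div (hp 0) (by simpa using hq.ne')
      refine (h1.add (h3.const_mul 2)).congr_deriv ?_
      simp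
      ring
    · have h := hmax
      have h' : ∀ᶠ t in 𝓝 (0 : ℝ), u (z + t • e) + 2 * Real.log (r ^ 2 - ‖z + t • e - x₀‖ ^ 2) ≤
          u z + 2 * Real.log (r ^ 2 - ‖z - x₀‖ ^ 2) := hl0.eventually h
      filter_upwards [h'] with t ht
      rw [hnorm] at ht
      simpa using ht
  have : 4 / q + 8 * a ^ 2 / q ^ 2 = - (2 * (-(2 * q + (2 * a) ^ 2) / q ^ 2)) := by
    field_simp
    ring
  linarith

/-- Comparison with the barrier `log (c r² / (r² - |x - x₀|²)²)`, evaluated at the centre. -/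
lemma exp_mul_sq_le_of_closedBall_subset {N : ℕ} (hN : 2 ≤ N) {Ω : Set (Euc N)} (hΩo : IsOpen Ω)
    {μ : ℝ} (hμ : μ ≤ 0) {u : Euc N → ℝ} (hu : IsSolution μ Ω u) {x₀ : Euc N} {r c : ℝ}
    (hr : 0 < r) (hball : Metric.closedBall x₀ r ⊆ Ω) (hcN : 4 * (N : ℝ) ≤ c) (hcr : r ^ 2 ≤ c) :
    Real.exp (u x₀) * r ^ 2 ≤ c := by
  by_contra! hlt
  have hN' : (2 : ℝ) ≤ N := by exact_mod_cast hN
  set F : Euc N → ℝ := fun x => (r ^ 2 - ‖x - x₀‖ ^ 2) ^ 2 * Real.exp (u x) with hF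
  have hFc : ContinuousOn F (Metric.closedBall x₀ r) := by
    have huc := hu.1.continuousOn.mono hball
    exact ContinuousOn.mul (by fun_prop) huc.rexp
  obtain ⟨z, hzb, hzmax⟩ := (isCompact_closedBall x₀ r).exists_isMaxOn
    ⟨x₀, Metric.mem_closedBall_self hr.le⟩ hFc
  have hFz : c * r ^ 2 < F z := by
    have h1 : F x₀ ≤ F z := hzmax (Metric.mem_closedBall_self hr.le)
    have h2 : F x₀ = (Real.exp (u x₀) * r ^ 2) * r ^ 2 := by simp [hF]; ring
    have h3 : c * r ^ 2 < (Real.exp (u x₀) * r ^ 2) * r ^ 2 :=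
      mul_lt_mul_of_pos_right hlt (by positivity)
    linarith
  have hzle : ‖z - x₀‖ ≤ r := by simpa [dist_eq_norm] using hzb
  have hr2 : 0 < r ^ 2 := by positivity
  have hcpos : 0 < c * r ^ 2 := mul_pos (by linarith) hr2
  -- `F` vanishes on the sphere, so its maximum point is interior.
  have hzlt : ‖z - x₀‖ < r := by
    refine lt_of_le_of_ne hzle fun h => ?_
    have : F z = 0 := by simp [hF, h]
    linarith
  have hq : 0 < r ^ 2 - ‖z - x₀‖ ^ 2 := by nlinarith [norm_nonneg (z - x₀)]
  have hzΩ : z ∈ Ω := hball hzb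
  have hlog : IsLocalMax (fun x => u x + 2 * Real.log (r ^ 2 - ‖x - x₀‖ ^ 2)) z := by
    have hnb : Metric.ball x₀ r ∈ 𝓝 z :=
      Metric.isOpen_ball.mem_nhds (by simpa [dist_eq_norm] using hzlt)
    have key : ∀ x ∈ Metric.ball x₀ r,
        u x + 2 * Real.log (r ^ 2 - ‖x - x₀‖ ^ 2) = Real.log (F x) := fun x hx => by
      have hx' : ‖x - x₀‖ < r := by simpa [dist_eq_norm] using hx
      have hqx : 0 < r ^ 2 - ‖x - x₀‖ ^ 2 := by nlinarith [norm_nonneg (x - x₀)]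
      simp only [hF]
      rw [Real.log_mul (by positivity) (Real.exp_pos _).ne', Real.log_exp, Real.log_pow]
      push_cast
      ring
    filter_upwards [hnb] with x hx
    rw [key x hx, key z (mem_of_mem_nhds hnb)]
    have hx' : ‖x - x₀‖ < r := by simpa [dist_eq_norm] using hx
    have hqx : 0 < r ^ 2 - ‖x - x₀‖ ^ 2 := by nlinarith [norm_nonneg (x - x₀)]
    exact Real.log_le_log (by simp only [hF]; positivity) (hzmax (Metric.ball_subset_closedBall hx))
  set q : ℝ := r ^ 2 - ‖z - x₀‖ ^ 2 with hqdef
  have hlap : lap u z ≤ N * (4 / q) + 8 * ‖z - x₀‖ ^ 2 / q ^ 2 := by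
    calc lap u z ≤ ∑ i : Fin N, (4 / q + 8 * (z - x₀) i ^ 2 / q ^ 2) :=
          Finset.sum_le_sum fun i _ => second_partial_le hΩo hu.1 hzΩ hq hlog i
      _ = _ := by
          rw [Finset.sum_add_distrib, EuclideanSpace.real_norm_sq_eq, Finset.mul_sum,
            Finset.sum_div]
          simp
  have hle : N * (4 / q) + 8 * ‖z - x₀‖ ^ 2 / q ^ 2 ≤ c * r ^ 2 / q ^ 2 := by
    have h1 : N * (4 / q) + 8 * ‖z - x₀‖ ^ 2 / q ^ 2 =
        (4 * N * q + 8 * ‖z - x₀‖ ^ 2) / q ^ 2 := by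
      field_simp
    rw [h1]
    gcongr
    nlinarith [sq_nonneg ‖z - x₀‖]
  have hFz' : c * r ^ 2 < q ^ 2 * Real.exp (u z) := hFz
  have hexp : c * r ^ 2 / q ^ 2 < Real.exp (u z) := by
    rw [div_lt_iff₀ (by positivity)]; linarith
  have hupos : 0 < u z := by
    rw [← Real.one_lt_exp_iff]
    refine lt_of_le_of_lt ?_ hexp
    rw [one_le_div (by positivity)]
    have : q ≤ r ^ 2 := by simp [hqdef]
    nlinarith
  have heq := hu.2 z hzΩ
  have hpot : μ / bdist Ω z ^ 2 * u z ≤ 0 :=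
    mul_nonpos_of_nonpos_of_nonneg (div_nonpos_of_nonpos_of_nonneg hμ (by positivity)) hupos.le
  linarith

theorem keller_osserman_log_bound {N : ℕ} (hN : 2 ≤ N)
    (Ω : Set (Euc N)) (hΩo : IsOpen Ω) (hΩne : Ω.Nonempty)
    (hΩb : Bornology.IsBounded Ω) (hΩreg : BoundaryC3 Ω) :
    ∃ A > 0, ∀ μ : ℝ, μ ≤ 0 → ∀ u : Euc N → ℝ, IsSolution μ Ω u →
      ∀ x ∈ Ω, u x ≤ Real.log (A / (bdist Ω x) ^ 2) := by
  have : Nontrivial (Euc N) := by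
    have : Nonempty (Fin N) := ⟨⟨0, by omega⟩⟩
    infer_instance
  have hne : (Ωᶜ).Nonempty := by
    rw [Set.nonempty_compl]
    rintro rfl
    exact NormedSpace.unbounded_univ ℝ (Euc N) hΩb
  obtain ⟨p, hp⟩ := hne
  obtain ⟨R, hR⟩ := hΩb.subset_closedBall p
  have hN' : (2 : ℝ) ≤ N := by exact_mod_cast hN
  refine ⟨4 * N + R ^ 2, by positivity, fun μ hμ u hu x hx => ?_⟩
  have hδ : 0 < bdist Ω x :=
    (hΩo.isClosed_compl.notMem_iff_infDist_pos ⟨p, hp⟩).1 (by simpa using hx)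
  have hδR : bdist Ω x ≤ R := (Metric.infDist_le_dist_of_mem hp).trans (hR hx)
  have hrbound : ∀ r ∈ Set.Ioo 0 (bdist Ω x), Real.exp (u x) * r ^ 2 ≤ 4 * N + R ^ 2 := by
    rintro r ⟨hr0, hr⟩
    refine exp_mul_sq_le_of_closedBall_subset hN hΩo hμ hu hr0 ?_ ?_ ?_
    · intro y hy
      by_contra hyΩ
      have h1 : bdist Ω x ≤ dist x y := Metric.infDist_le_dist_of_mem hyΩ
      have h2 : dist y x ≤ r := hy
      rw [dist_comm] at h2
      linarith
    · nlinarith [sq_nonneg R]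
    · nlinarith
  have hlim : Real.exp (u x) * bdist Ω x ^ 2 ≤ 4 * N + R ^ 2 := by
    have hc : Tendsto (fun r : ℝ => Real.exp (u x) * r ^ 2) (𝓝[<] bdist Ω x)
        (𝓝 (Real.exp (u x) * bdist Ω x ^ 2)) :=
      (Continuous.tendsto (by fun_prop) _).mono_left nhdsWithin_le_nhds
    exact le_of_tendsto hc (Filter.mem_of_superset (Ioo_mem_nhdsLT hδ) hrbound)
  rw [Real.le_log_iff_exp_le (by positivity), le_div_iff₀ (by positivity)]
  exact hlim
end
end

section
/- For every μ ∈ ℝ there exists a constant A > 0 with A ≥ e·(sup_{x∈Ω} δ(x))² such that every classical solution u of (*) satisfies u(x) ≤ L_A(δ(x)) for all x ∈ Ω; in particular, limsup_{δ(x)→0} u(x) / log(δ(x)^{-2}) ≤ 1 for every classical solution u of (*). -/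
/-!
The bound is local. Fix `x₀ ∈ Ω`, put `d = δ(x₀)`, `r = d / 2`, and compare `u` on the ball
`B(x₀, r)`, where `δ ≥ d / 2`, with the barrier
`w(x) = L + 2 log (r² / (r² - |x - x₀|²))`, which blows up on the boundary of the ball and has
`w(x₀) = L = L_A(d)`. If `u(x₀) > L`, then `u - w` has an interior maximum point `y` with
`u(y) > w(y)`, and there `Δu(y) ≤ Δw(y)` (`lap_le_barrier`). On the other hand
`Δu ≥ e^u - c u` with `c = 4|μ| / d²`, the function `e^s - c s` is increasing for `e^s ≥ c`, and
`e^w - c w ≥ Δw` once `e^L = A L / d²` with `A ≥ 8|μ| + 16N`; this is a contradiction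
(`le_of_lambert`). Only the second-order test for a maximum is needed, so no regularity of the
boundary enters.

The asymptotic statement follows from `L = log (δ⁻²) + log A + log L` and the fact that `log L`
is sublinear (`lambert_asymptotic`).
-/

open MeasureTheory Real Filter Topology Set

noncomputable section

/- `LA A t`: for `A ≥ e·t²` the unique number `L ≥ 1` with `e^L/L = A/t²`
(junk value `0` if no such number exists). -/
open Classical in
def LA (A t : ℝ) : ℝ :=
  if h : ∃ L : ℝ, 1 ≤ L ∧ Real.exp L / L = A / t ^ 2 then h.choose else 0

/-! ### Second-order test -/

lemma second_deriv_nonpos_s6 {f f' : ℝ → ℝ} {a : ℝ}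
    (hf : ∀ᶠ t in 𝓝 (0 : ℝ), HasDerivAt f (f' t) t) (hf' : HasDerivAt f' a 0)
    (hmax : IsLocalMax f 0) : a ≤ 0 := by
  by_contra ha
  push Not at ha
  have h1 : deriv f =ᶠ[𝓝 0] f' := hf.mono fun t ht => ht.deriv
  have h2 : deriv (deriv f) 0 = a := by rw [h1.deriv_eq, hf'.deriv]
  have h3 : IsLocalMin f 0 :=
    isLocalMin_of_deriv_deriv_pos (by rw [h2]; exact ha) hmax.deriv_eq_zero
      hf.self_of_nhds.continuousAt
  -- A point that is both a local minimum and a local maximum forces `f` to be locally constant.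
  have h4 : f =ᶠ[𝓝 0] fun _ => f 0 := by
    filter_upwards [h3, hmax] with t h h' using le_antisymm h' h
  have h5 : deriv (deriv f) 0 = 0 := by
    rw [h4.deriv.deriv_eq]; simp
  linarith

/-- Second-order test at a local maximum of `u - w`, where
`w(x) = -2 log (r² - |x - x₀|²)`: the right-hand side is `Δw(y)`. -/
lemma lap_le_barrier {N : ℕ} {u : Euc N → ℝ} {x₀ y : Euc N} {r : ℝ}
    (hu : ContDiffAt ℝ 2 u y) (hy : 0 < r ^ 2 - ‖y - x₀‖ ^ 2)
    (hmax : IsLocalMax (fun x => u x + 2 * Real.log (r ^ 2 - ‖x - x₀‖ ^ 2)) y) :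
    lap u y ≤ 4 * N / (r ^ 2 - ‖y - x₀‖ ^ 2)
      + 8 * ‖y - x₀‖ ^ 2 / (r ^ 2 - ‖y - x₀‖ ^ 2) ^ 2 := by
  set R := r ^ 2 - ‖y - x₀‖ ^ 2 with hR
  have key : ∀ i : Fin N, fderiv ℝ (fun y => fderiv ℝ u y (EuclideanSpace.single i 1)) y
      (EuclideanSpace.single i 1) ≤ 4 / R + 8 * ((y - x₀) i) ^ 2 / R ^ 2 := by
    intro i
    set e : Euc N := EuclideanSpace.single i 1 with he
    set z : ℝ := (y - x₀) i with hz
    -- Along the line `t ↦ y + t e`, the weight `r² - |x - x₀|²` is an explicit quadratic.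
    have hq : ∀ t : ℝ, r ^ 2 - ‖y + t • e - x₀‖ ^ 2 = R - 2 * t * z - t ^ 2 := by
      intro t
      have h1 : y + t • e - x₀ = (y - x₀) + t • e := by abel
      have h2 : inner ℝ (y - x₀) e = z := by
        rw [he, EuclideanSpace.inner_single_right]; simp [hz]
      have h3 : ‖e‖ = 1 := by simp [he]
      rw [h1, norm_add_sq_real, inner_smul_right, h2, norm_smul, h3, hR, mul_one,
        Real.norm_eq_abs, sq_abs]
      ring
    have hline : ∀ t : ℝ, HasDerivAt (fun t : ℝ => y + t • e) e t := by
      intro t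
      simpa using ((hasDerivAt_id t).smul_const e).const_add y
    have hlc : Tendsto (fun t : ℝ => y + t • e) (𝓝 0) (𝓝 y) := by
      have := (hline 0).continuousAt.tendsto
      simpa using this
    have hQ : ∀ t : ℝ, HasDerivAt (fun t : ℝ => R - 2 * t * z - t ^ 2) (-(2 * z) - 2 * t) t := by
      intro t
      have h := (((hasDerivAt_id' t).const_mul (2 * z)).const_sub R).sub (hasDerivAt_pow 2 t)
      refine (h.congr_deriv (by simp)).congr_of_eventuallyEq (.of_forall fun s => ?_)
      simp only [Pi.sub_apply]
      ring
    have hpos : ∀ᶠ t in 𝓝 (0 : ℝ), 0 < R - 2 * t * z - t ^ 2 := by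
      have := (hQ 0).continuousAt.eventually (lt_mem_nhds (a := 0) (by simpa using hy))
      simpa using this
    have hdu : ∀ᶠ t in 𝓝 (0 : ℝ), DifferentiableAt ℝ u (y + t • e) := by
      have h := hu.eventually (by simp)
      exact (hlc.eventually h).mono fun t ht => ht.differentiableAt (by simp)
    have hdd : DifferentiableAt ℝ (fun x => fderiv ℝ u x e) y := by
      have h : ContDiffAt ℝ 1 (fderiv ℝ u) y := hu.fderiv_right (by norm_num)
      exact (h.differentiableAt (by simp)).clm_apply (differentiableAt_const _)
    have hmax' : IsLocalMax
        (fun t : ℝ => u (y + t • e) + 2 * Real.log (R - 2 * t * z - t ^ 2)) 0 := by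
      have := hlc.eventually hmax
      filter_upwards [this] with t ht
      have h0 := hq 0
      rw [zero_smul, add_zero] at h0
      rw [hq t, h0] at ht
      simpa only [zero_smul, add_zero] using ht
    have hfin := second_deriv_nonpos_s6
      (f' := fun t => fderiv ℝ u (y + t • e) e
        + 2 * ((-(2 * z) - 2 * t) / (R - 2 * t * z - t ^ 2)))
      (a := fderiv ℝ (fun x => fderiv ℝ u x e) y e + 2 * ((-2 * R - (-(2 * z)) * (-(2 * z))) / R ^ 2))
      (f := fun t : ℝ => u (y + t • e) + 2 * Real.log (R - 2 * t * z - t ^ 2)) ?_ ?_ hmax'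
    · have e1 : 4 / R + 8 * z ^ 2 / R ^ 2 = -(2 * ((-2 * R - (-(2 * z)) * (-(2 * z))) / R ^ 2)) := by
        field_simp; ring
      rw [e1]; linarith
    · filter_upwards [hpos, hdu] with t ht hd
      exact (hd.hasFDerivAt.comp_hasDerivAt t (hline t)).add
        (((hQ t).log ht.ne').const_mul 2)
    · have hd1 : HasDerivAt (fun t : ℝ => fderiv ℝ u (y + t • e) e)
          (fderiv ℝ (fun x => fderiv ℝ u x e) y e) 0 := by
        have hd0 : HasFDerivAt (fun x => fderiv ℝ u x e)
            (fderiv ℝ (fun x => fderiv ℝ u x e) y) (y + (0 : ℝ) • e) := by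
          simpa using hdd.hasFDerivAt
        exact hd0.comp_hasDerivAt (0 : ℝ) (hline 0)
      have hn : HasDerivAt (fun t : ℝ => -(2 * z) - 2 * t) (-2) 0 := by
        simpa using ((hasDerivAt_id (0 : ℝ)).const_mul 2).const_sub (-(2 * z))
      have h2 := (hn.div (hQ 0) (by simpa using hy.ne')).const_mul 2
      refine (hd1.add h2).congr_deriv ?_
      simp
  calc lap u y ≤ ∑ i : Fin N, (4 / R + 8 * ((y - x₀) i) ^ 2 / R ^ 2) :=
        Finset.sum_le_sum fun i _ => key i
    _ = 4 * N / R + 8 * ‖y - x₀‖ ^ 2 / R ^ 2 := by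
        simp only [Finset.sum_add_distrib, EuclideanSpace.norm_sq_eq, ← Finset.sum_div,
          ← Finset.mul_sum, Real.norm_eq_abs, sq_abs, Finset.sum_const, Finset.card_univ,
          Fintype.card_fin, nsmul_eq_mul]
        ring

/-! ### Comparison with the barrier -/

/-- The increment of `e^s` dominates that of `c s` to the right of a point `w` where `e^w ≥ c`. -/
lemma exp_sub_lt {c w v : ℝ} (hc : c ≤ Real.exp w) (hw : w < v) :
    Real.exp w - c * w < Real.exp v - c * v := by
  have h1 : Real.exp v = Real.exp w * Real.exp (v - w) := by rw [← Real.exp_add]; ring_nf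
  have h2 : v - w + 1 < Real.exp (v - w) := Real.add_one_lt_exp (by linarith)
  have h3 := Real.exp_pos w
  nlinarith

/-- The barrier is a supersolution: with `c = 4|μ| / d²` and barrier value `w` at a point at
distance `s` from the centre, `w ≥ 1`, `c ≤ e^w`, and `Δw ≤ e^w - c w`. -/
lemma barrier_ineq {N : ℕ} (hN : 2 ≤ N) {μ A d R s L : ℝ} (hA : 8 * |μ| + 16 * N ≤ A)
    (hd : 0 < d) (hR : 0 < R) (hR_def : R = (d / 2) ^ 2 - s ^ 2) (hL : 1 ≤ L)
    (hLA : Real.exp L / L = A / d ^ 2) :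
    1 ≤ L + 2 * Real.log ((d / 2) ^ 2 / R) ∧
    4 * |μ| / d ^ 2 ≤ Real.exp (L + 2 * Real.log ((d / 2) ^ 2 / R)) ∧
    4 * N / R + 8 * s ^ 2 / R ^ 2 ≤ Real.exp (L + 2 * Real.log ((d / 2) ^ 2 / R))
      - 4 * |μ| / d ^ 2 * (L + 2 * Real.log ((d / 2) ^ 2 / R)) := by
  have hm := abs_nonneg μ
  have hNr : (2 : ℝ) ≤ N := by exact_mod_cast hN
  -- `q = r² / R`, so that the barrier value is `L + 2 log q`.
  set q := (d / 2) ^ 2 / R with hq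
  have hq1 : 1 ≤ q := by
    rw [hq, le_div_iff₀ hR]
    nlinarith [sq_nonneg s]
  have hq0 : 0 < q := by linarith
  set w := L + 2 * Real.log q with hw
  have hexpL : Real.exp L = A * L / d ^ 2 := by
    rw [div_eq_div_iff (by positivity) (by positivity)] at hLA
    rw [eq_div_iff (by positivity)]; exact hLA
  have hexpw : Real.exp w = A * L / d ^ 2 * q ^ 2 := by
    rw [hw, Real.exp_add, hexpL, two_mul, Real.exp_add, Real.exp_log hq0]; ring
  have hlog0 : 0 ≤ Real.log q := Real.log_nonneg hq1
  have hq2 : 1 ≤ q ^ 2 := one_le_pow₀ hq1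
  have hlog2 : 2 * Real.log q ≤ q ^ 2 - 1 := by
    have := Real.log_le_sub_one_of_pos (pow_pos hq0 2)
    rw [Real.log_pow] at this
    exact_mod_cast this
  have hLq : 1 ≤ L * q ^ 2 := by nlinarith
  have hbar : w ≤ 2 * (L * q ^ 2) := by rw [hw]; nlinarith
  have hc1 : 4 * |μ| / d ^ 2 ≤ Real.exp w := by
    rw [hexpw, div_mul_eq_mul_div]
    refine div_le_div_of_nonneg_right ?_ (by positivity)
    nlinarith
  have hlapq : 4 * N / R + 8 * s ^ 2 / R ^ 2 ≤ 16 * N / d ^ 2 * q ^ 2 := by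
    have e1 : 16 * N / d ^ 2 * q ^ 2 = N * d ^ 2 / R ^ 2 := by
      rw [hq]; field_simp; ring
    have e2 : 4 * N / R + 8 * s ^ 2 / R ^ 2 = (4 * N * R + 8 * s ^ 2) / R ^ 2 := by
      field_simp
    rw [e1, e2]
    refine div_le_div_of_nonneg_right ?_ (by positivity)
    rw [hR_def]
    nlinarith [mul_nonneg (sub_nonneg.2 hNr) (sq_nonneg s)]
  have hfin : 16 * N / d ^ 2 * q ^ 2 ≤ Real.exp w - 4 * |μ| / d ^ 2 * w := by
    have e1 : Real.exp w - 4 * |μ| / d ^ 2 * w - 16 * N / d ^ 2 * q ^ 2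
        = (A * (L * q ^ 2) - 4 * |μ| * w - 16 * N * q ^ 2) / d ^ 2 := by
      rw [hexpw]; ring
    have h1 : 0 ≤ A * (L * q ^ 2) - 4 * |μ| * w - 16 * N * q ^ 2 := by
      have i1 := mul_le_mul_of_nonneg_right hA (by positivity : 0 ≤ L * q ^ 2)
      have i2 := mul_le_mul_of_nonneg_left hbar (by positivity : 0 ≤ 4 * |μ|)
      have i3 : q ^ 2 ≤ L * q ^ 2 := by nlinarith
      have i4 := mul_le_mul_of_nonneg_left i3 (by positivity : (0 : ℝ) ≤ 16 * N)
      linarith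
    have := div_nonneg h1 (sq_nonneg d)
    linarith
  exact ⟨by linarith, hc1, hlapq.trans hfin⟩

/-- Interior maximum of `u - w` with `w` the barrier on the ball of radius `r`. The maximum is
produced for the continuous function `(r² - |x - x₀|²)² e^u` on the closed ball, which vanishes
on the sphere. -/
lemma exists_touching {N : ℕ} {u : Euc N → ℝ} {x₀ : Euc N} {r : ℝ} (hr : 0 < r)
    (hu : ContinuousOn u (Metric.closedBall x₀ r)) :
    ∃ y, 0 < r ^ 2 - ‖y - x₀‖ ^ 2 ∧ y ∈ Metric.ball x₀ r ∧
      IsLocalMax (fun x => u x + 2 * Real.log (r ^ 2 - ‖x - x₀‖ ^ 2)) y ∧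
      u x₀ + 2 * Real.log (r ^ 2) ≤ u y + 2 * Real.log (r ^ 2 - ‖y - x₀‖ ^ 2) := by
  have hcont : ContinuousOn (fun x => (r ^ 2 - ‖x - x₀‖ ^ 2) ^ 2 * Real.exp (u x))
      (Metric.closedBall x₀ r) := by
    refine ContinuousOn.mul (by fun_prop) (Real.continuous_exp.comp_continuousOn hu)
  obtain ⟨y, hy, hmax⟩ := (isCompact_closedBall x₀ r).exists_isMaxOn
    ⟨x₀, Metric.mem_closedBall_self hr.le⟩ hcont
  have hpos : ∀ x ∈ Metric.ball x₀ r, 0 < r ^ 2 - ‖x - x₀‖ ^ 2 := by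
    intro x hx
    rw [mem_ball_iff_norm] at hx
    have := norm_nonneg (x - x₀)
    nlinarith
  have hlog : ∀ x ∈ Metric.ball x₀ r,
      Real.log ((r ^ 2 - ‖x - x₀‖ ^ 2) ^ 2 * Real.exp (u x))
        = u x + 2 * Real.log (r ^ 2 - ‖x - x₀‖ ^ 2) := by
    intro x hx
    rw [Real.log_mul (pow_pos (hpos x hx) 2).ne' (Real.exp_pos _).ne', Real.log_pow, Real.log_exp]
    push_cast; ring
  have hx₀ : x₀ ∈ Metric.ball x₀ r := Metric.mem_ball_self hr
  have hyb : y ∈ Metric.ball x₀ r := by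
    by_contra hn
    have hnorm : ‖y - x₀‖ = r := by
      rw [mem_closedBall_iff_norm] at hy
      rw [mem_ball_iff_norm] at hn
      exact le_antisymm hy (not_lt.1 hn)
    have h1 := hmax (Metric.ball_subset_closedBall hx₀)
    have h2 : 0 < (r ^ 2 - ‖x₀ - x₀‖ ^ 2) ^ 2 * Real.exp (u x₀) :=
      mul_pos (pow_pos (hpos _ hx₀) 2) (Real.exp_pos _)
    simp only [mem_ofPred_eq, hnorm, sub_self (r ^ 2)] at h1
    norm_num at h1 h2
    linarith
  have hall : ∀ x ∈ Metric.ball x₀ r, u x + 2 * Real.log (r ^ 2 - ‖x - x₀‖ ^ 2)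
      ≤ u y + 2 * Real.log (r ^ 2 - ‖y - x₀‖ ^ 2) := by
    intro x hx
    rw [← hlog x hx, ← hlog y hyb]
    exact Real.log_le_log (mul_pos (pow_pos (hpos _ hx) 2) (Real.exp_pos _))
      (hmax (Metric.ball_subset_closedBall hx))
  refine ⟨y, hpos y hyb, hyb, ?_, ?_⟩
  · filter_upwards [Metric.isOpen_ball.mem_nhds hyb] with x hx using hall x hx
  · simpa using hall x₀ hx₀

/-- Comparison with the barrier on the ball of radius `δ(x) / 2`. -/
lemma le_of_lambert {N : ℕ} (hN : 2 ≤ N) {Ω : Set (Euc N)} (hΩo : IsOpen Ω)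
    (hc : Ωᶜ.Nonempty) {μ A : ℝ} (hA : 8 * |μ| + 16 * N ≤ A) {u : Euc N → ℝ}
    (hu : IsSolution μ Ω u) {x : Euc N} (hx : x ∈ Ω) {L : ℝ} (hL : 1 ≤ L)
    (hLA : Real.exp L / L = A / (bdist Ω x) ^ 2) : u x ≤ L := by
  by_contra hlt
  push Not at hlt
  have hd : 0 < bdist Ω x := bdist_pos hΩo hc hx
  set d := bdist Ω x with hd_def
  have hδ : ∀ y ∈ Metric.closedBall x (d / 2), d / 2 ≤ bdist Ω y := by
    intro y hy
    have h1 : d ≤ bdist Ω y + dist x y := Metric.infDist_le_infDist_add_dist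
    rw [Metric.mem_closedBall, dist_comm] at hy
    linarith
  have hsub : Metric.closedBall x (d / 2) ⊆ Ω := by
    intro y hy
    by_contra hn
    have h1 : bdist Ω y = 0 := Metric.infDist_zero_of_mem (s := Ωᶜ) hn
    linarith [hδ y hy]
  obtain ⟨y, hR, hyb, hmax, hle⟩ := exists_touching (x₀ := x) (r := d / 2) (by positivity)
    (hu.1.continuousOn.mono hsub)
  have hyc := Metric.ball_subset_closedBall hyb
  have hyΩ := hsub hyc
  have hlap := lap_le_barrier (hu.1.contDiffAt (hΩo.mem_nhds hyΩ)) hR hmax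
  have heq := hu.2 y hyΩ
  have hδy := hδ y hyc
  set R := (d / 2) ^ 2 - ‖y - x‖ ^ 2 with hR_def
  set s := ‖y - x‖ with hs
  have hm := abs_nonneg μ
  have hwu : L + 2 * Real.log ((d / 2) ^ 2 / R) < u y := by
    rw [Real.log_div (by positivity) hR.ne']; linarith
  obtain ⟨hw1, hcw, hineq⟩ := barrier_ineq (s := s) hN hA hd hR hR_def hL hLA
  have hmono := exp_sub_lt hcw hwu
  have hu0 : 0 < u y := by linarith
  have hpot : μ / (bdist Ω y) ^ 2 * u y ≤ 4 * |μ| / d ^ 2 * u y := by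
    refine mul_le_mul_of_nonneg_right ?_ hu0.le
    have h1 : (d / 2) ^ 2 ≤ (bdist Ω y) ^ 2 := pow_le_pow_left₀ (by positivity) hδy 2
    calc μ / (bdist Ω y) ^ 2 ≤ |μ| / (bdist Ω y) ^ 2 :=
          div_le_div_of_nonneg_right (le_abs_self μ) (sq_nonneg _)
      _ ≤ |μ| / (d / 2) ^ 2 := div_le_div_of_nonneg_left hm (by positivity) h1
      _ = 4 * |μ| / d ^ 2 := by field_simp; ring
  linarith

/-! ### The function `L_A` -/

lemma exists_lambert {A t : ℝ} (ht : 0 < t) (hA : Real.exp 1 * t ^ 2 ≤ A) :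
    ∃ L : ℝ, 1 ≤ L ∧ Real.exp L / L = A / t ^ 2 := by
  have hlow : Real.exp 1 ≤ A / t ^ 2 := by rwa [le_div_iff₀ (by positivity)]
  have htop := Real.tendsto_exp_div_pow_atTop 1
  obtain ⟨b, hb, hb1⟩ :=
    ((htop.eventually (eventually_ge_atTop (A / t ^ 2))).and (eventually_ge_atTop 1)).exists
  rw [pow_one] at hb
  have hcont : ContinuousOn (fun L : ℝ => Real.exp L / L) (Icc 1 b) :=
    Real.continuous_exp.continuousOn.div continuousOn_id fun x hx => by
      exact (lt_of_lt_of_le one_pos hx.1).ne'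
  obtain ⟨L, hL, hLe⟩ := intermediate_value_Icc hb1 hcont ⟨by simpa using hlow, hb⟩
  exact ⟨L, hL.1, hLe⟩

lemma LA_spec {A t : ℝ} (ht : 0 < t) (hA : Real.exp 1 * t ^ 2 ≤ A) :
    1 ≤ LA A t ∧ Real.exp (LA A t) / LA A t = A / t ^ 2 := by
  have h := exists_lambert ht hA
  rw [LA, dif_pos h]
  exact h.choose_spec

/-- `L_A(t) ≤ (1 + ε) log (t⁻²)` for small `t`, where `L_A(t)` enters through its defining
equation. -/
lemma lambert_asymptotic {A ε : ℝ} (hA : 0 < A) (hε : 0 < ε) :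
    ∃ ρ > 0, ∀ t L : ℝ, 0 < t → t < ρ → 1 ≤ L → Real.exp L / L = A / t ^ 2 →
      0 < Real.log (t ^ 2)⁻¹ ∧ L ≤ (1 + ε) * Real.log (t ^ 2)⁻¹ := by
  -- `log L ≤ θ L - 1 - log θ`, with `θ` chosen so that `1 / (1 - θ) < 1 + ε`.
  set θ := ε / (2 * (1 + ε)) with hθ
  have hθ0 : 0 < θ := by positivity
  set C := Real.log A - 1 - Real.log θ with hC
  refine ⟨Real.exp (-(|C| / ε + 1)), Real.exp_pos _, ?_⟩
  intro t L ht htρ hL hLe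
  have hlt : Real.log t < -(|C| / ε + 1) := by
    rwa [Real.log_lt_iff_lt_exp ht]
  have hK : Real.log (t ^ 2)⁻¹ = -(2 * Real.log t) := by
    rw [Real.log_inv, Real.log_pow]; push_cast; ring
  set K := Real.log (t ^ 2)⁻¹ with hKdef
  have hCε : 0 ≤ |C| / ε := by positivity
  have hK0 : 0 < K := by rw [hK]; linarith
  refine ⟨hK0, ?_⟩
  have hL0 : 0 < L := by linarith
  have hlogL : L - Real.log L = Real.log A + K := by
    have h := congrArg Real.log hLe
    rw [Real.log_div (Real.exp_pos _).ne' hL0.ne', Real.log_exp,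
      div_eq_mul_inv A, Real.log_mul hA.ne' (by positivity)] at h
    exact h
  have h1 : Real.log θ + Real.log L ≤ θ * L - 1 := by
    rw [← Real.log_mul hθ0.ne' hL0.ne']
    exact Real.log_le_sub_one_of_pos (by positivity)
  have h2 : (1 - θ) * L ≤ K + C := by rw [hC]; linarith
  have h3 : 2 * C ≤ ε * K := by
    have : 2 * (|C| / ε) ≤ K := by rw [hK]; linarith
    have h4 := mul_le_mul_of_nonneg_left this hε.le
    have h5 : ε * (2 * (|C| / ε)) = 2 * |C| := by field_simp
    have := le_abs_self C
    linarith
  have h4 : (1 - θ) * (2 * (1 + ε)) = 2 + ε := by rw [hθ]; field_simp; ring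
  have h5 := mul_le_mul_of_nonneg_right h2 (by positivity : 0 ≤ 2 * (1 + ε))
  have h6 : (2 + ε) * L ≤ (2 + ε) * ((1 + ε) * K) := by
    have e1 : (1 - θ) * L * (2 * (1 + ε)) = (2 + ε) * L := by rw [← h4]; ring
    rw [e1] at h5
    nlinarith
  exact le_of_mul_le_mul_left h6 (by positivity)

theorem keller_osserman_lambert_bound {N : ℕ} (hN : 2 ≤ N)
    (Ω : Set (Euc N)) (hΩo : IsOpen Ω) (hΩne : Ω.Nonempty)
    (hΩb : Bornology.IsBounded Ω) (hΩreg : BoundaryC3 Ω) (μ : ℝ) :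
    ∃ A : ℝ, 0 < A ∧ Real.exp 1 * (sSup (bdist Ω '' Ω)) ^ 2 ≤ A ∧
      (∀ u : Euc N → ℝ, IsSolution μ Ω u → ∀ x ∈ Ω, u x ≤ LA A (bdist Ω x)) ∧
      (∀ u : Euc N → ℝ, IsSolution μ Ω u →
        ∀ ε > 0, ∃ ρ > 0, ∀ x ∈ Ω, bdist Ω x < ρ →
          u x / Real.log ((bdist Ω x) ^ 2)⁻¹ ≤ 1 + ε) := by
  have hNr : (2 : ℝ) ≤ N := by exact_mod_cast hN
  have : Nonempty (Fin N) := ⟨⟨0, by omega⟩⟩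
  have hc : Ωᶜ.Nonempty := by
    rw [nonempty_compl]
    rintro rfl
    exact NormedSpace.unbounded_univ ℝ (Euc N) hΩb
  obtain ⟨p, hp⟩ := hc
  have hbdd : BddAbove (bdist Ω '' Ω) := by
    obtain ⟨M, hM⟩ := hΩb.subset_closedBall p
    refine ⟨M, ?_⟩
    rintro _ ⟨x, hx, rfl⟩
    exact (Metric.infDist_le_dist_of_mem hp).trans (hM hx)
  set S := sSup (bdist Ω '' Ω) with hS
  set A := Real.exp 1 * S ^ 2 + (8 * |μ| + 16 * N) with hAdef
  have hm := abs_nonneg μ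
  have hE : 0 ≤ Real.exp 1 * S ^ 2 := by positivity
  have hA0 : 0 < A := by linarith
  have hA1 : Real.exp 1 * S ^ 2 ≤ A := by linarith
  have hA2 : 8 * |μ| + 16 * N ≤ A := by linarith
  have hspec : ∀ x ∈ Ω, 1 ≤ LA A (bdist Ω x) ∧
      Real.exp (LA A (bdist Ω x)) / LA A (bdist Ω x) = A / (bdist Ω x) ^ 2 := by
    intro x hx
    have hd := bdist_pos hΩo ⟨p, hp⟩ hx
    refine LA_spec hd (le_trans ?_ hA1)
    have : bdist Ω x ≤ S := le_csSup hbdd ⟨x, hx, rfl⟩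
    gcongr
  have hmain : ∀ u : Euc N → ℝ, IsSolution μ Ω u → ∀ x ∈ Ω, u x ≤ LA A (bdist Ω x) :=
    fun u hu x hx => le_of_lambert hN hΩo ⟨p, hp⟩ hA2 hu hx (hspec x hx).1 (hspec x hx).2
  refine ⟨A, hA0, hA1, hmain, ?_⟩
  intro u hu ε hε
  obtain ⟨ρ, hρ, h⟩ := lambert_asymptotic hA0 hε
  refine ⟨ρ, hρ, fun x hx hxρ => ?_⟩
  obtain ⟨hK, hle⟩ := h _ _ (bdist_pos hΩo ⟨p, hp⟩ hx) hxρ (hspec x hx).1 (hspec x hx).2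
  rw [div_le_iff₀ hK]
  exact (hmain u hu x hx).trans hle
end
end

section
/- Let μ ≠ 0 and let φ ∈ C(∂Ω) with φ > 0 on ∂Ω. Then the boundary value problem −Δu − (μ/δ²)u + e^u = 0 in Ω, u = φ on ∂Ω, has no solution u ∈ C²(Ω) ∩ C(Ω̄). -/
/-!
Near a boundary point `y₀` with `u y₀ = c > 0`, the equation forces `|Δu|` to be at least of order
`|μ| c / δ²`, with a constant sign. If `x₀ ∈ Ω` has `y₀` as nearest boundary point, then for `t`
small the point `x_t = y₀ + t (x₀ - y₀)` is the centre of a ball in `Ω` whose radius is comparable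
to `s = t |x₀ - y₀|`, and `δ ≤ 2 s` on this ball. So `|Δu| ≥ C / s²` on a ball of radius `s / 2`,
and comparison with a paraboloid (`exists_growth_of_lap_ge`, a form of the maximum principle) shows
that `u` oscillates there by an amount independent of `s`. This contradicts the continuity of `u`
at `y₀`. Only one boundary point, touched by an interior ball, is needed, and such a point exists
for every bounded nonempty open set.
-/

open MeasureTheory Real Filter Topology Set

noncomputable section

/-- Necessary second-order condition at a local maximum. -/
lemma not_isLocalMax_of_second_deriv_pos {g g' : ℝ → ℝ} {b : ℝ}
    (hg : ∀ᶠ s in 𝓝 (0 : ℝ), HasDerivAt g (g' s) s) (hg' : HasDerivAt g' b 0) (hb : 0 < b) :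
    ¬ IsLocalMax g 0 := by
  intro hmax
  have hd : deriv g =ᶠ[𝓝 0] g' := hg.mono fun s hs => hs.deriv
  have hdd : deriv (deriv g) 0 = b := by rw [hd.deriv_eq, hg'.deriv]
  have hmin : IsLocalMin g 0 :=
    isLocalMin_of_deriv_deriv_pos (by rwa [hdd]) hmax.deriv_eq_zero
      hg.self_of_nhds.continuousAt
  -- Being both a local maximum and a local minimum, `g` is locally constant.
  have hconst : g =ᶠ[𝓝 0] fun _ => g 0 := by
    filter_upwards [hmax, hmin] with s h1 h2 using le_antisymm h1 h2
  have h0 : deriv (deriv g) 0 = 0 := by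
    rw [hconst.deriv.deriv_eq]
    simp
  linarith

/-- If `Δw ≥ a > 0` on a closed ball of radius `r`, then `w` exceeds its value at the centre by at
least `a r² / (4 N)` somewhere on the ball. The maximum of `w - a / (4 N) |x - x₀|²`, whose
Laplacian is at least `a / 2`, must lie on the sphere. -/
lemma exists_growth_of_lap_ge {N : ℕ} (hN : 0 < N) {U : Set (Euc N)} (hU : IsOpen U)
    {w : Euc N → ℝ} (hw : ContDiffOn ℝ 2 w U) {x₀ : Euc N} {r a : ℝ} (hr : 0 < r) (ha : 0 < a)
    (hball : Metric.closedBall x₀ r ⊆ U) (hlap : ∀ x ∈ Metric.closedBall x₀ r, a ≤ lap w x) :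
    ∃ y ∈ Metric.closedBall x₀ r, w x₀ + a * r ^ 2 / (4 * N) ≤ w y := by
  have hN' : (0 : ℝ) < N := by exact_mod_cast hN
  set k : ℝ := a / (4 * N) with hk
  obtain ⟨y, hy, hymax⟩ := (isCompact_closedBall x₀ r).exists_isMaxOn
    (Metric.nonempty_closedBall.2 hr.le)
    (f := fun x => w x - k * ‖x - x₀‖ ^ 2)
    ((hw.continuousOn.mono hball).sub (by fun_prop))
  refine ⟨y, hy, ?_⟩
  rcases lt_or_eq_of_le (Metric.mem_closedBall.1 hy) with hlt | heq
  · exfalso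
    have hloc : IsLocalMax (fun x => w x - k * ‖x - x₀‖ ^ 2) y :=
      hymax.isLocalMax (Filter.mem_of_superset
        (Metric.isOpen_ball.mem_nhds (Metric.mem_ball.2 hlt)) Metric.ball_subset_closedBall)
    have hsum : ∑ _i : Fin N, 2 * k < lap w y := by
      refine lt_of_lt_of_le ?_ (hlap y hy)
      have h4 : (N : ℝ) * (2 * k) = a / 2 := by rw [hk]; field_simp; norm_num
      simp only [Finset.sum_const, Finset.card_univ, Fintype.card_fin, nsmul_eq_mul, h4]
      linarith
    obtain ⟨i, -, hi⟩ := Finset.exists_lt_of_sum_lt hsum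
    set e : Euc N := EuclideanSpace.single i 1 with he
    have hnorm : ‖e‖ = 1 := by simp [he]
    have hline : ∀ s : ℝ, HasDerivAt (fun s : ℝ => y + s • e) e s := fun s => by
      simpa using ((hasDerivAt_id s).smul_const e).const_add y
    have hcont : ContinuousAt (fun s : ℝ => y + s • e) 0 := (hline 0).continuousAt
    have hy0 : y + (0 : ℝ) • e = y := by simp
    have hyU : y ∈ U := hball hy
    set c : ℝ := inner ℝ (y - x₀) e with hc
    have hsq : ∀ s : ℝ, ‖y + s • e - x₀‖ ^ 2 = ‖y - x₀‖ ^ 2 + 2 * (s * c) + s ^ 2 := by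
      intro s
      rw [show y + s • e - x₀ = (y - x₀) + s • e by abel, norm_add_sq_real,
        real_inner_smul_right, norm_smul, hnorm]
      simp [hc]
    refine not_isLocalMax_of_second_deriv_pos
      (g := fun s => w (y + s • e) - k * ‖y + s • e - x₀‖ ^ 2)
      (g' := fun s => fderiv ℝ w (y + s • e) e - k * (2 * c + 2 * s))
      (b := fderiv ℝ (fun z => fderiv ℝ w z e) y e - 2 * k) ?_ ?_ (by linarith) ?_
    · have hev : ∀ᶠ s in 𝓝 (0 : ℝ), y + s • e ∈ U :=
        hcont (hU.mem_nhds (by simpa using hyU))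
      filter_upwards [hev] with s hs
      have hdw : DifferentiableAt ℝ w (y + s • e) :=
        (hw.contDiffAt (hU.mem_nhds hs)).differentiableAt (by norm_num)
      have h1 := hdw.hasFDerivAt.comp_hasDerivAt s (hline s)
      have h2 : HasDerivAt (fun s : ℝ => ‖y + s • e - x₀‖ ^ 2) (2 * c + 2 * s) s := by
        simp only [hsq]
        have h3 := ((((hasDerivAt_id s).mul_const c).const_mul 2).const_add
          (‖y - x₀‖ ^ 2)).add ((hasDerivAt_id s).pow 2)
        refine h3.congr_deriv ?_
        simp
      exact h1.sub (h2.const_mul k)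
    · have hd2 : DifferentiableAt ℝ (fun z => fderiv ℝ w z e) y := by
        have h5 : ContDiffAt ℝ 1 (fderiv ℝ w) y :=
          (hw.contDiffAt (hU.mem_nhds hyU)).fderiv_right (by norm_num)
        exact (h5.differentiableAt (by norm_num)).clm_apply (differentiableAt_const e)
      have h1 : HasDerivAt (fun s : ℝ => fderiv ℝ w (y + s • e) e)
          (fderiv ℝ (fun z => fderiv ℝ w z e) y e) 0 := by
        refine HasFDerivAt.comp_hasDerivAt (l := fun z => fderiv ℝ w z e) 0 ?_ (hline 0)
        rw [hy0]
        exact hd2.hasFDerivAt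
      have h2 : HasDerivAt (fun s : ℝ => k * (2 * c + 2 * s)) (2 * k) 0 := by
        have h3 := (((hasDerivAt_id (0 : ℝ)).const_mul 2).const_add (2 * c)).const_mul k
        refine h3.congr_deriv ?_
        ring
      exact h1.sub h2
    · have h6 : IsLocalMax (fun x => w x - k * ‖x - x₀‖ ^ 2) (y + (0 : ℝ) • e) := by
        rwa [hy0]
      exact h6.comp_continuous (g := fun s : ℝ => y + s • e) hcont
  · have h := hymax (Metric.mem_closedBall_self hr.le)
    simp only [Set.mem_ofPred_eq, sub_self, norm_zero] at h
    rw [← dist_eq_norm, heq] at h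
    have h7 : a * r ^ 2 / (4 * N) = k * r ^ 2 := by rw [hk]; ring
    rw [h7]
    linarith

lemma lap_neg {N : ℕ} (u : Euc N → ℝ) (x : Euc N) : lap (fun y => -u y) x = -lap u x := by
  simp [lap, fderiv_fun_neg]

theorem no_solution_with_positive_boundary_data {N : ℕ} (hN : 2 ≤ N)
    (Ω : Set (Euc N)) (hΩo : IsOpen Ω) (hΩne : Ω.Nonempty)
    (hΩb : Bornology.IsBounded Ω) (hΩreg : BoundaryC3 Ω)
    {μ : ℝ} (hμ : μ ≠ 0)
    (φ : Euc N → ℝ) (hφc : ContinuousOn φ (frontier Ω))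
    (hφpos : ∀ x ∈ frontier Ω, 0 < φ x) :
    ¬ ∃ u : Euc N → ℝ, IsSolution μ Ω u ∧ ContinuousOn u (closure Ω) ∧
      ∀ x ∈ frontier Ω, u x = φ x := by
  rintro ⟨u, ⟨huC, hueq⟩, hucont, hubd⟩
  have hN0 : 0 < N := by omega
  have hNR : (0 : ℝ) < N := by exact_mod_cast hN0
  have : Nonempty (Fin N) := ⟨⟨0, hN0⟩⟩
  have hcne : (Ωᶜ).Nonempty := by
    rw [Set.nonempty_compl]
    rintro rfl
    exact NormedSpace.unbounded_univ ℝ (Euc N) hΩb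
  have hcl : IsClosed Ωᶜ := hΩo.isClosed_compl
  obtain ⟨x₀, hx₀⟩ := hΩne
  obtain ⟨y₀, hy₀, hdist⟩ := hcl.exists_infDist_eq_dist hcne x₀
  have hδpos : ∀ x ∈ Ω, 0 < bdist Ω x := fun x hx =>
    (hcl.notMem_iff_infDist_pos hcne).1 (fun h => h hx)
  set d := dist x₀ y₀ with hd
  have hdpos : 0 < d := hdist ▸ hδpos x₀ hx₀
  have hballΩ : ∀ x, dist x x₀ < d → x ∈ Ω := by
    intro x hx
    by_contra hxn
    have := Metric.infDist_le_dist_of_mem (x := x₀) (s := Ωᶜ) hxn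
    rw [dist_comm] at this
    linarith
  set p : ℝ → Euc N := fun t => y₀ + t • (x₀ - y₀) with hp
  have hpy : ∀ t, 0 < t → dist (p t) y₀ = t * d := by
    intro t ht
    simp [hp, dist_eq_norm, hd, norm_smul, abs_of_pos ht]
  have hpx : ∀ t, t < 1 → dist (p t) x₀ = (1 - t) * d := by
    intro t ht
    have : p t - x₀ = -((1 - t) • (x₀ - y₀)) := by simp only [hp]; module
    rw [dist_eq_norm, this, norm_neg, norm_smul, Real.norm_eq_abs,
      abs_of_pos (by linarith), hd, dist_eq_norm]
  have hy₀cl : y₀ ∈ closure Ω := by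
    rw [Metric.mem_closure_iff]
    intro ε hε
    obtain ⟨t, ht0, ht⟩ := exists_between (lt_min one_pos (div_pos hε hdpos))
    have ht1 := ht.trans_le (min_le_left _ _)
    have ht2 := ht.trans_le (min_le_right _ _)
    rw [lt_div_iff₀ hdpos] at ht2
    refine ⟨p t, hballΩ _ ?_, ?_⟩
    · rw [hpx t ht1]; nlinarith
    · rw [dist_comm, hpy t ht0]; exact ht2
  have hy₀fr : y₀ ∈ frontier Ω := by
    rw [hΩo.frontier_eq]; exact ⟨hy₀cl, hy₀⟩
  have hc : 0 < u y₀ := by rw [hubd y₀ hy₀fr]; exact hφpos y₀ hy₀fr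
  set c := u y₀ with hcdef
  have hm : 0 < |μ| := abs_pos.2 hμ
  set m := |μ| with hmdef
  -- `2 η` is less than the oscillation `m c / (256 N)` produced below at every scale.
  set η : ℝ := min (c / 2) (m * c / (1024 * N)) with hη
  have hηpos : 0 < η := lt_min (by positivity) (by positivity)
  obtain ⟨ε, hε, hcε⟩ := Metric.continuousOn_iff.1 hucont y₀ hy₀cl η hηpos
  -- The scale: `2 s < ε`, `t < 1`, and the term `e ^ u` is absorbed by half of `m c / (8 s ^ 2)`.
  obtain ⟨s, hs0, hs⟩ : ∃ s : ℝ, 0 < s ∧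
      s < min (min d (ε / 2)) (min 1 (m * c / (16 * Real.exp (2 * c)))) :=
    exists_between (lt_min (lt_min hdpos (by positivity)) (lt_min one_pos (by positivity)))
  simp only [lt_min_iff] at hs
  obtain ⟨⟨hsd, hsε⟩, hs1, hsexp⟩ := hs
  set t := s / d with ht
  have ht0 : 0 < t := by positivity
  have ht1 : t < 1 := (div_lt_one hdpos).2 hsd
  have htd : t * d = s := div_mul_cancel₀ s hdpos.ne'
  have hBy : ∀ x ∈ Metric.closedBall (p t) (s / 2), dist x y₀ < 2 * s := by
    intro x hx
    have h1 := dist_triangle x (p t) y₀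
    rw [hpy t ht0, htd] at h1
    have h2 := Metric.mem_closedBall.1 hx
    linarith
  have hBΩ : Metric.closedBall (p t) (s / 2) ⊆ Ω := by
    intro x hx
    apply hballΩ
    have h1 := dist_triangle x (p t) x₀
    rw [hpx t ht1] at h1
    have h2 := Metric.mem_closedBall.1 hx
    nlinarith
  have hBu : ∀ x ∈ Metric.closedBall (p t) (s / 2), |u x - c| < η := by
    intro x hx
    have := hcε x (subset_closure (hBΩ hx)) (by linarith [hBy x hx])
    rwa [Real.dist_eq] at this
  set a : ℝ := m * c / (16 * s ^ 2) with ha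
  have hapos : 0 < a := by positivity
  have hexp : Real.exp (2 * c) ≤ a := by
    rw [lt_div_iff₀ (by positivity)] at hsexp
    rw [ha, le_div_iff₀ (by positivity)]
    have : s ^ 2 ≤ s := by nlinarith
    nlinarith [Real.exp_pos (2 * c)]
  have hmain : ∀ x ∈ Metric.closedBall (p t) (s / 2),
      2 * a ≤ m / bdist Ω x ^ 2 * u x ∧ Real.exp (u x) ≤ a := by
    intro x hx
    have h1 := abs_lt.1 (hBu x hx)
    have hηc : η ≤ c / 2 := min_le_left _ _
    have hδ := hδpos x (hBΩ hx)
    have hδ2 : bdist Ω x ≤ 2 * s :=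
      (Metric.infDist_le_dist_of_mem hy₀).trans (hBy x hx).le
    refine ⟨?_, (Real.exp_le_exp.2 (by linarith)).trans hexp⟩
    calc 2 * a = m / (2 * s) ^ 2 * (c / 2) := by rw [ha]; field_simp; norm_num
      _ ≤ m / bdist Ω x ^ 2 * u x := by
        gcongr
        linarith
  have hosc : a * (s / 2) ^ 2 / (4 * N) = 4 * (m * c / (1024 * N)) := by
    rw [ha]; field_simp; norm_num
  have hη2 : η ≤ m * c / (1024 * N) := min_le_right _ _
  have hcen := abs_lt.1 (hBu (p t) (Metric.mem_closedBall_self (by positivity)))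
  rcases lt_or_gt_of_ne hμ with hneg | hpos
  · obtain ⟨y, hy, hyw⟩ := exists_growth_of_lap_ge hN0 hΩo huC (half_pos hs0) hapos hBΩ
      (by
        intro x hx
        have h1 := hueq x (hBΩ hx)
        obtain ⟨h2, -⟩ := hmain x hx
        have h3 : m / bdist Ω x ^ 2 * u x = -(μ / bdist Ω x ^ 2 * u x) := by
          rw [hmdef, abs_of_neg hneg]; ring
        linarith [Real.exp_pos (u x)])
    have hyu := abs_lt.1 (hBu y hy)
    linarith
  · obtain ⟨y, hy, hyw⟩ := exists_growth_of_lap_ge hN0 hΩo huC.neg (half_pos hs0) hapos hBΩ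
      (by
        intro x hx
        have h1 := hueq x (hBΩ hx)
        obtain ⟨h2, h4⟩ := hmain x hx
        have h3 : m / bdist Ω x ^ 2 * u x = μ / bdist Ω x ^ 2 * u x := by
          rw [hmdef, abs_of_pos hpos]
        rw [lap_neg]
        linarith)
    have hyu := abs_lt.1 (hBu y hy)
    linarith
end
end
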